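/- arXiv:2505.21989 — 3 statements merged into one kernel-verified Lean document; each statement's English description precedes it below -/
import Mathlib

section
/- For all integers n ≥ 0, the number of (4,9)-regular overpartitions satisfies R̄_{4,9}(18n+12) ≡ 0 (mod 96). -/
/-- Number of partitions of `a` with no part divisible by `ℓ` or `μ`
(the non-overlined parts of an `(ℓ,μ)`-regular overpartition). -/
def regularCount (ℓ μ a : ℕ) : ℕ :=
  Fintype.card {p : a.Partition // ∀ i ∈ p.parts, ¬ ℓ ∣ i ∧ ¬ μ ∣ i}

/-- Number of partitions of `a` into distinct parts with no part divisible by `ℓ` or `μ`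
(the overlined parts of an `(ℓ,μ)`-regular overpartition). -/
def regularDistinctCount (ℓ μ a : ℕ) : ℕ :=
  Fintype.card {p : a.Partition // p.parts.Nodup ∧ ∀ i ∈ p.parts, ¬ ℓ ∣ i ∧ ¬ μ ∣ i}

/-- `Rbar ℓ μ n` is the number of `(ℓ,μ)`-regular overpartitions of `n`: pairs `(λ, δ)`
where `λ` is a partition, `δ` is a partition into distinct parts, `|λ| + |δ| = n`,
and no part of `λ` or `δ` is divisible by `ℓ` or by `μ`. -/
def Rbar (ℓ μ n : ℕ) : ℕ :=
  ∑ ab ∈ Finset.HasAntidiagonal.antidiagonal n, regularCount ℓ μ ab.1 * regularDistinctCount ℓ μ ab.2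

open PowerSeries
open scoped PowerSeries.WithPiTopology

theorem qq_regular_hasProd (p : ℕ → Prop) [DecidablePred p] :
    HasProd (fun i ↦ if p (i + 1) then ∑' j : ℕ, X ^ ((i + 1) * j) else 1)
    (PowerSeries.mk fun n ↦ (Fintype.card {x : n.Partition // ∀ i ∈ x.parts, p i} : ℤ)) := by
  have h := Nat.Partition.hasProd_powerSeriesMk_card_restricted ℤ p
  have h2 : ∀ n, (Nat.Partition.restricted n p).card =
      Fintype.card {x : n.Partition // ∀ i ∈ x.parts, p i} := by
    intro n
    rw [Fintype.card_subtype]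
    rfl
  simp_rw [h2] at h
  exact h

theorem qq_distinct_hasProd (p : ℕ → Prop) [DecidablePred p] :
    HasProd (fun i ↦ if p (i + 1) then 1 + X ^ (i + 1) else 1)
    (PowerSeries.mk fun n ↦
      (Fintype.card {x : n.Partition // x.parts.Nodup ∧ ∀ i ∈ x.parts, p i} : ℤ)) := by
  convert! Nat.Partition.hasProd_genFun (fun i c ↦ if p i ∧ c < 2 then (1 : ℤ) else 0) using 1
  · ext1 i
    rw [tsum_eq_single 0]
    · by_cases h : p (i + 1)
      · rw [if_pos h, if_pos ⟨h, by omega⟩, smul_eq_C_mul]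
        simp
      · rw [if_neg h, if_neg (by tauto), smul_eq_C_mul]
        simp
    · intro b hb
      rw [if_neg (by omega), smul_eq_C_mul]
      simp
  · simp_rw [Nat.Partition.genFun, Fintype.card_subtype, Finset.card_filter, Finsupp.prod,
      Finset.prod_boole]
    ext n
    simp only [coeff_mk]
    push_cast
    refine Finset.sum_congr rfl fun x _ ↦ ?_
    congr 1
    rw [Multiset.nodup_iff_count_le_one]
    simp
    constructor
    · rintro ⟨h1, h2⟩ i hi
      exact ⟨h2 i hi, by have := h1 i; omega⟩
    · intro h
      refine ⟨fun i ↦ ?_, fun i hi ↦ (h i hi).1⟩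
      by_cases hi : i ∈ x.parts
      · have := (h i hi).2; omega
      · simp [Multiset.count_eq_zero.2 hi]

theorem qq_mult (c : ℤ) : Multipliable fun n ↦ (1 : ℤ⟦X⟧) + C c * X ^ (n + 1) := by
  apply WithPiTopology.multipliable_one_add_of_tendsto_order_atTop_nhds_top
  refine ENat.tendsto_nhds_top_iff_natCast_lt.mpr fun n ↦ Filter.eventually_atTop.mpr ⟨n, ?_⟩
  intro m hm
  grw [← le_order_mul, order_X_pow]
  refine lt_add_of_nonneg_of_lt (by simp) ?_
  norm_cast
  omega

/-- the infinite product of `1 + c q^i` -/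
noncomputable def qqP (c : ℤ) : ℤ⟦X⟧ := ∏' n : ℕ, ((1 : ℤ⟦X⟧) + C c * X ^ (n + 1))

theorem qq_hasProd (c : ℤ) : HasProd (fun n : ℕ ↦ (1 : ℤ⟦X⟧) + C c * X ^ (n + 1)) (qqP c) :=
  (qq_mult c).hasProd

theorem qq_expand_cont (k : ℕ) (hk : k ≠ 0) : Continuous (expand k hk : ℤ⟦X⟧ →ₐ[ℤ] ℤ⟦X⟧) := by
  rw [continuous_iff_continuousAt]
  intro f
  rw [ContinuousAt, WithPiTopology.tendsto_iff_coeff_tendsto]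
  intro d
  simp_rw [coeff_expand]
  split_ifs
  · exact (WithPiTopology.continuous_coeff ℤ (d / k)).continuousAt
  · exact tendsto_const_nhds

theorem qq_hasProd_dvd (c : ℤ) (k : ℕ) (hk : k ≠ 0) :
    HasProd (fun n : ℕ ↦ if k ∣ n + 1 then (1 : ℤ⟦X⟧) + C c * X ^ (n + 1) else 1)
      (expand k hk (qqP c)) := by
  have h := (qq_hasProd c).map (expand k hk : ℤ⟦X⟧ →ₐ[ℤ] ℤ⟦X⟧) (qq_expand_cont k hk)
  have hinj : Function.Injective (fun n : ℕ ↦ (n + 1) * k - 1) := by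
    intro a b hab
    have h1 : 0 < (a + 1) * k := by positivity
    have h2 : 0 < (b + 1) * k := by positivity
    have h3 : (a + 1) * k = (b + 1) * k := by simp only at hab; omega
    have := Nat.eq_of_mul_eq_mul_right (Nat.pos_of_ne_zero hk) h3
    omega
  rw [← hinj.hasProd_iff]
  · convert h using 1
    ext1 n
    have h1 : (n + 1) * k - 1 + 1 = (n + 1) * k := by
      have h1 : 0 < (n + 1) * k := by positivity
      omega
    simp only [Function.comp_apply, h1, dvd_mul_left, if_true, map_add, map_mul, map_one, map_pow,
      expand_C, expand_X, ← pow_mul]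
    rw [mul_comm k]
  · intro x hx
    rw [if_neg]
    rintro ⟨j, hj⟩
    apply hx
    refine ⟨j - 1, ?_⟩
    have : j ≠ 0 := by rintro rfl; simp at hj
    have h1 : j - 1 + 1 = j := by omega
    simp only [h1]
    rw [mul_comm j k, ← hj]; rfl

theorem qq_incl_excl (c : ℤ) (F : ℤ⟦X⟧)
    (hF : HasProd (fun n : ℕ ↦ if ¬ 4 ∣ n + 1 ∧ ¬ 9 ∣ n + 1 then
      (1 : ℤ⟦X⟧) + C c * X ^ (n + 1) else 1) F) :
    F * expand 4 (by norm_num) (qqP c) * expand 9 (by norm_num) (qqP c)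
      = qqP c * expand 36 (by norm_num) (qqP c) := by
  refine ((hF.mul (qq_hasProd_dvd c 4 (by norm_num))).mul
    (qq_hasProd_dvd c 9 (by norm_num))).unique ?_
  convert (qq_hasProd c).mul (qq_hasProd_dvd c 36 (by norm_num)) using 2 with n
  have h36 : 36 ∣ n + 1 ↔ 4 ∣ n + 1 ∧ 9 ∣ n + 1 := by omega
  by_cases h4 : 4 ∣ n + 1 <;> by_cases h9 : 9 ∣ n + 1 <;> simp [h36, h4, h9]

theorem qqP_ne (c : ℤ) : constantCoeff (qqP c) = 1 := by
  have h := (qq_hasProd c).map (constantCoeff (R := ℤ)) (WithPiTopology.continuous_constantCoeff ℤ)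
  refine h.unique ?_
  convert hasProd_one using 2 with n
  simp

/-- summand of the finite form of the Gauss identity -/
noncomputable def qqt (n k : ℕ) : ℤ⟦X⟧ :=
  (-1) ^ k * (∏ i ∈ Finset.Ico k n, (1 - X ^ (i + 1))) * (∏ i ∈ Finset.range k, (1 + X ^ i))
    * X ^ ((n + 1) * k)

theorem qqt_succ_left (n k : ℕ) (hk : k ≤ n) :
    qqt (n + 1) k = qqt n k * (1 - X ^ (n + 1)) * X ^ k := by
  rw [qqt, qqt, Finset.prod_Ico_succ_top hk, show (n + 1 + 1) * k = (n + 1) * k + k by ring, pow_add]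
  ring

theorem qqt_succ_right (n k : ℕ) (hk : k < n) :
    qqt n (k + 1) * (1 - X ^ (k + 1)) = - (qqt n k * (1 + X ^ k) * X ^ (n + 1)) := by
  rw [qqt, qqt, Finset.prod_eq_prod_Ico_succ_bot hk, Finset.prod_range_succ,
    show (n + 1) * (k + 1) = (n + 1) * k + (n + 1) by ring, pow_add X ((n + 1) * k)]
  ring

theorem qqt_tele (n m : ℕ) (hm : m ≤ n) :
    ∑ k ∈ Finset.range (m + 1), (qqt (n + 1) k - (1 + X ^ (n + 1)) * qqt n k)
      = - (qqt n m * (1 + X ^ m) * X ^ (n + 1)) := by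
  induction m with
  | zero =>
    rw [Finset.sum_range_one, qqt_succ_left n 0 (by omega)]
    ring
  | succ m ih =>
    rw [Finset.sum_range_succ, ih (by omega), ← qqt_succ_right n m (by omega),
      qqt_succ_left n (m + 1) hm]
    ring

/-- the coefficients of `φ(-q)` -/
def qqc (k : ℕ) : ℤ := if k = 0 then 1 else 2 * (-1) ^ k

theorem qqt_diag (n : ℕ) : qqt n n * (1 + X ^ n) * X ^ (n + 1) + qqt (n + 1) (n + 1) * (-1)
      = (-1) ^ n * 2 * (∏ i ∈ Finset.range (n + 1), (1 + X ^ (i + 1))) * X ^ ((n + 1) ^ 2) := by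
  have h : (∏ i ∈ Finset.range (n + 1), (1 + X ^ i)) * (1 + X ^ (n + 1)) =
      2 * ∏ i ∈ Finset.range (n + 1), ((1 : ℤ⟦X⟧) + X ^ (i + 1)) := by
    rw [← Finset.prod_range_succ (fun i ↦ (1 : ℤ⟦X⟧) + X ^ i), Finset.prod_range_succ']
    norm_num
    ring
  rw [qqt, qqt, Finset.Ico_self, Finset.Ico_self, Finset.prod_empty, Finset.prod_range_succ _ n,
    show (n + 1) ^ 2 = (n + 1) * n + (n + 1) by ring,
    show (n + 1 + 1) * (n + 1) = (n + 1) * n + (n + 1) + (n + 1) by ring]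
  rw [Finset.prod_range_succ _ n] at h
  rw [pow_add X _ (n + 1), pow_add X _ (n + 1)]
  linear_combination ((-1) ^ n * X ^ ((n + 1) * n) * X ^ (n + 1)) * h

theorem qqt_sum (n : ℕ) : ∑ k ∈ Finset.range (n + 1), qqt n k =
    (∏ i ∈ Finset.range n, (1 + X ^ (i + 1))) *
      ∑ k ∈ Finset.range (n + 1), C (qqc k) * X ^ (k ^ 2) := by
  induction n with
  | zero => simp [qqt, qqc]
  | succ n ih =>
    have h1 := qqt_tele n n le_rfl
    have h2 := qqt_diag n
    rw [Finset.sum_sub_distrib, ← Finset.mul_sum, ih] at h1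
    rw [Finset.sum_range_succ _ (n + 1), Finset.sum_range_succ _ (n + 1), mul_add]
    have h3 : (C (qqc (n + 1)) : ℤ⟦X⟧) = 2 * (-1) ^ (n + 1) := by
      simp [qqc]
    rw [h3]
    rw [Finset.prod_range_succ] at h2 ⊢
    linear_combination h1 - h2

/-- `∑ c k q^(k^2)` -/
noncomputable def qqT (c : ℕ → ℤ) : ℤ⟦X⟧ :=
  PowerSeries.mk fun n ↦ if IsSquare n then c n.sqrt else 0

theorem qqT_tendsto (c : ℕ → ℤ) : Filter.Tendsto
    (fun n ↦ ∑ k ∈ Finset.range (n + 1), C (c k) * X ^ (k ^ 2)) Filter.atTop (nhds (qqT c)) := by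
  rw [WithPiTopology.tendsto_iff_coeff_tendsto]
  intro d
  apply tendsto_const_nhds.congr'
  filter_upwards [Filter.eventually_ge_atTop d] with n hn
  simp only [map_sum, coeff_C_mul, coeff_X_pow, qqT, coeff_mk]
  split_ifs with h
  · obtain ⟨r, rfl⟩ := h
    rw [Finset.sum_eq_single r]
    · simp [sq]
    · intro b _ hb
      rw [if_neg, mul_zero]
      intro h
      apply hb
      nlinarith
    · intro h
      exfalso; apply h
      simp only [Finset.mem_range]
      nlinarith
  · symm
    apply Finset.sum_eq_zero
    intro k _
    rw [if_neg, mul_zero]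
    intro h'
    exact h ⟨k, by rw [h', sq]⟩

theorem qq_gauss : qqP 1 * qqT qqc = qqP (-1) := by
  have hB := (qq_hasProd 1).tendsto_prod_nat
  have hA := (qq_hasProd (-1)).tendsto_prod_nat
  have h1 := hB.mul (qqT_tendsto qqc)
  refine tendsto_nhds_unique h1 ?_
  rw [WithPiTopology.tendsto_iff_coeff_tendsto] at hA ⊢
  intro d
  refine (hA d).congr' ?_
  filter_upwards [Filter.eventually_ge_atTop d] with n hn
  have h := qqt_sum n
  rw [Finset.sum_range_succ'] at h
  have h0 : qqt n 0 = ∏ i ∈ Finset.range n, (1 + C (-1) * X ^ (i + 1)) := by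
    simp [qqt, sub_eq_add_neg]
  have h2 : coeff d (∑ k ∈ Finset.range n, qqt n (k + 1)) = 0 := by
    rw [map_sum]
    apply Finset.sum_eq_zero
    intro k _
    rw [qqt, coeff_mul_X_pow', if_neg]
    nlinarith
  rw [h0] at h
  have h3 := congrArg (coeff d) h
  rw [map_add, h2, zero_add] at h3
  rw [h3]
  simp

theorem qq_mult' (c : ℤ) (p : ℕ → Prop) [DecidablePred p] :
    Multipliable fun n ↦ if p (n + 1) then (1 : ℤ⟦X⟧) + C c * X ^ (n + 1) else 1 := by
  have h : (fun n ↦ if p (n + 1) then (1 : ℤ⟦X⟧) + C c * X ^ (n + 1) else 1) =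
      fun n ↦ 1 + (if p (n + 1) then C c * X ^ (n + 1) else 0) := by
    ext1 n
    split_ifs <;> simp
  rw [h]
  apply WithPiTopology.multipliable_one_add_of_tendsto_order_atTop_nhds_top
  refine ENat.tendsto_nhds_top_iff_natCast_lt.mpr fun n ↦ Filter.eventually_atTop.mpr ⟨n, ?_⟩
  intro m hm
  split_ifs
  · grw [← le_order_mul, order_X_pow]
    refine lt_add_of_nonneg_of_lt (by simp) ?_
    norm_cast
    omega
  · simp

theorem qqP_ne_zero (c : ℤ) (k : ℕ) (hk : k ≠ 0) : expand k hk (qqP c) ≠ 0 := by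
  intro h
  have := congrArg constantCoeff h
  simp [qqP_ne] at this

/-- generating function -/
noncomputable def qqG : ℤ⟦X⟧ := PowerSeries.mk fun n ↦ (Rbar 4 9 n : ℤ)

theorem qqG_eq : qqG * qqT qqc * expand 36 (by norm_num) (qqT qqc) =
    expand 4 (by norm_num) (qqT qqc) * expand 9 (by norm_num) (qqT qqc) := by
  have hr := qq_regular_hasProd (fun i ↦ ¬ 4 ∣ i ∧ ¬ 9 ∣ i)
  have hd := qq_distinct_hasProd (fun i ↦ ¬ 4 ∣ i ∧ ¬ 9 ∣ i)
  have hm := (qq_mult' (-1) (fun i ↦ ¬ 4 ∣ i ∧ ¬ 9 ∣ i)).hasProd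
  set Fr : ℤ⟦X⟧ := PowerSeries.mk fun n ↦
    (Fintype.card {x : n.Partition // ∀ i ∈ x.parts, ¬ 4 ∣ i ∧ ¬ 9 ∣ i} : ℤ) with hFr
  set Fd : ℤ⟦X⟧ := PowerSeries.mk fun n ↦
    (Fintype.card {x : n.Partition // x.parts.Nodup ∧ ∀ i ∈ x.parts, ¬ 4 ∣ i ∧ ¬ 9 ∣ i} : ℤ)
    with hFd
  have hG : qqG = Fr * Fd := by
    ext n
    simp [qqG, coeff_mul, Rbar, hFr, hFd, regularCount, regularDistinctCount]
  set Fm := ∏' n : ℕ, if ¬ 4 ∣ n + 1 ∧ ¬ 9 ∣ n + 1 then (1 : ℤ⟦X⟧) + C (-1) * X ^ (n + 1) else 1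
  have h1 : Fr * Fm = 1 := by
    refine (hr.mul hm).unique ?_
    convert hasProd_one using 2 with n
    split_ifs
    · have := WithPiTopology.tsum_pow_mul_one_sub_of_constantCoeff_eq_zero (R := ℤ)
        (f := X ^ (n + 1)) (by simp)
      simp_rw [← pow_mul] at this
      rw [map_neg, map_one, neg_one_mul, ← sub_eq_add_neg]
      exact this
    · simp
  have h2 := qq_incl_excl (-1) Fm hm
  have h3 := qq_incl_excl 1 Fd (by simpa using hd)
  have hg := qq_gauss
  have e4 := congrArg (expand 4 (by norm_num)) hg
  have e9 := congrArg (expand 9 (by norm_num)) hg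
  have e36 := congrArg (expand 36 (by norm_num)) hg
  rw [map_mul] at e4 e9 e36
  have n1 : qqP 1 ≠ 0 := by
    intro h
    have := congrArg constantCoeff h
    simp [qqP_ne] at this
  have n4 := qqP_ne_zero 1 4 (by norm_num)
  have n9 := qqP_ne_zero 1 9 (by norm_num)
  have n36 := qqP_ne_zero 1 36 (by norm_num)
  rw [← e4, ← e9, ← e36, ← hg] at h2
  rw [hG]
  apply mul_left_cancel₀ (mul_ne_zero (mul_ne_zero n1 n36) (mul_ne_zero n4 n9))
  generalize expand 4 _ (qqT qqc) = x4 at *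
  generalize expand 9 _ (qqT qqc) = x9 at *
  generalize expand 36 _ (qqT qqc) = x36 at *
  generalize expand 4 _ (qqP 1) = B4 at *
  generalize expand 9 _ (qqP 1) = B9 at *
  generalize expand 36 _ (qqP 1) = B36 at *
  generalize qqP 1 = B at *
  generalize qqT qqc = x at *
  linear_combination (-Fr * Fd * B4 * B9) * h2 + (Fd * B4 ^ 2 * x4 * B9 ^ 2 * x9) * h1
    + (B4 * x4 * B9 * x9) * h3

section tools
variable {R : Type*} [CommRing R]

/-- substitution `q ↦ q^k` -/
noncomputable abbrev qe (k : ℕ) [NeZero k] : R⟦X⟧ →ₐ[R] R⟦X⟧ := expand k (NeZero.ne k)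

theorem qe_qe (a b c : ℕ) [NeZero a] [NeZero b] [NeZero c] (h : c = a * b) (f : R⟦X⟧) :
    qe a (qe b f) = qe c f := by
  subst h
  exact (expand_mul a (NeZero.ne a) b (NeZero.ne b) f).symm

/-- exponents all in one residue class -/
def qS (m r : ℕ) (f : R⟦X⟧) : Prop := ∀ n, n % m ≠ r % m → coeff n f = 0

/-- extract a residue class -/
noncomputable def qR (m r : ℕ) : R⟦X⟧ →ₗ[R] R⟦X⟧ where
  toFun f := PowerSeries.mk fun n ↦ if n % m = r % m then coeff n f else 0
  map_add' f g := by ext n; simp only [coeff_mk, map_add]; split_ifs <;> simp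
  map_smul' a f := by ext n; simp

theorem coeff_qR (m r n : ℕ) (f : R⟦X⟧) :
    coeff n (qR m r f) = if n % m = r % m then coeff n f else 0 := by simp [qR]

theorem qS_mul {m r s t : ℕ} {f g : R⟦X⟧} (hf : qS m r f) (hg : qS m s g)
    (h : (r + s) % m = t % m) : qS m t (f * g) := by
  intro n hn
  rw [coeff_mul]
  refine Finset.sum_eq_zero fun p hp ↦ ?_
  rw [Finset.HasAntidiagonal.mem_antidiagonal] at hp
  by_cases h1 : p.1 % m = r % m
  · by_cases h2 : p.2 % m = s % m
    · exfalso
      apply hn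
      rw [← hp, ← h, Nat.add_mod, h1, h2, ← Nat.add_mod]
    · rw [hg _ h2, mul_zero]
  · rw [hf _ h1, zero_mul]

theorem qS_add {m r : ℕ} {f g : R⟦X⟧} (hf : qS m r f) (hg : qS m r g) : qS m r (f + g) := by
  intro n hn
  rw [map_add, hf n hn, hg n hn, add_zero]

theorem qS_neg {m r : ℕ} {f : R⟦X⟧} (hf : qS m r f) : qS m r (-f) := by
  intro n hn
  rw [map_neg, hf n hn, neg_zero]

theorem qS_sub {m r : ℕ} {f g : R⟦X⟧} (hf : qS m r f) (hg : qS m r g) : qS m r (f - g) := by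
  rw [sub_eq_add_neg]; exact qS_add hf (qS_neg hg)

theorem qS_C (m : ℕ) (a : R) : qS m 0 (C a) := by
  intro n hn
  rw [coeff_C, if_neg]
  rintro rfl
  exact hn rfl

theorem qS_two (m : ℕ) : qS m 0 (2 : R⟦X⟧) := by
  have := qS_C m (2 : R)
  rwa [map_ofNat] at this

theorem qS_one (m : ℕ) : qS m 0 (1 : R⟦X⟧) := by
  have := qS_C m (1 : R)
  rwa [map_one] at this

theorem qS_expand (m k : ℕ) [NeZero k] (h : m ∣ k) (f : R⟦X⟧) : qS m 0 (qe k f) := by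
  intro n hn
  rw [coeff_expand, if_neg]
  intro hk
  exact hn (by rw [Nat.zero_mod]; exact Nat.mod_eq_zero_of_dvd (h.trans hk))

theorem qS_qe {m r : ℕ} (k s : ℕ) [NeZero k] {f : R⟦X⟧} (hf : qS m r f)
    (h : (k * r) % m = s % m) : qS m s (qe k f) := by
  intro n hn
  rw [coeff_expand]
  split_ifs with hd
  · obtain ⟨j, rfl⟩ := hd
    rw [Nat.mul_div_cancel_left _ (NeZero.pos k)]
    apply hf
    intro hj
    apply hn
    rw [← h, Nat.mul_mod, hj, ← Nat.mul_mod]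
  · rfl

theorem qR_self {m r : ℕ} {f : R⟦X⟧} (hf : qS m r f) : qR m r f = f := by
  ext n
  rw [coeff_qR]
  split_ifs with h
  · rfl
  · rw [hf n h]

theorem qR_zero {m r s : ℕ} {f : R⟦X⟧} (hf : qS m s f) (h : s % m ≠ r % m) : qR m r f = 0 := by
  ext n
  rw [coeff_qR, map_zero]
  split_ifs with h1
  · apply hf n
    rw [h1]; exact h.symm
  · rfl

theorem qR_mul {m r : ℕ} {f g : R⟦X⟧} (hg : qS m 0 g) : qR m r (f * g) = qR m r f * g := by
  ext n
  rw [coeff_qR, coeff_mul, coeff_mul]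
  split_ifs with h
  · refine Finset.sum_congr rfl fun p hp ↦ ?_
    rw [Finset.HasAntidiagonal.mem_antidiagonal] at hp
    rw [coeff_qR]
    split_ifs with h1
    · rfl
    · rw [hg, mul_zero, zero_mul]
      intro h2
      apply h1
      rw [← h, ← hp, Nat.add_mod, h2]
      simp
  · symm
    refine Finset.sum_eq_zero fun p hp ↦ ?_
    rw [Finset.HasAntidiagonal.mem_antidiagonal] at hp
    rw [coeff_qR]
    split_ifs with h1
    · rw [hg, mul_zero]
      intro h2
      apply h
      rw [← h1, ← hp, Nat.add_mod, h2]
      simp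
    · rw [zero_mul]

theorem qe_frob (p : ℕ) [Fact p.Prime] (f : (ZMod p)⟦X⟧) [NeZero p] : qe p f = f ^ p := by
  have h := MvPowerSeries.map_frobenius_expand (R := ZMod p) p (NeZero.ne p) (f := f)
  rw [← h, ZMod.frobenius_zmod]
  ext n
  erw [MvPowerSeries.coeff_map]
  rfl

theorem qdvd (p : ℕ) (f : ℤ⟦X⟧) (h : map (Int.castRingHom (ZMod p)) f = 0) :
    ∃ g, f = (p : ℤ⟦X⟧) * g := by
  have h1 : ∀ n, ∃ a : ℤ, coeff n f = p * a := by
    intro n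
    have := congrArg (coeff n) h
    simp only [coeff_map, map_zero, eq_intCast] at this
    exact (ZMod.intCast_zmod_eq_zero_iff_dvd _ _).mp this
  choose a ha using h1
  refine ⟨PowerSeries.mk a, ?_⟩
  ext n
  have : (p : ℤ⟦X⟧) = C (p : ℤ) := by simp
  rw [this, coeff_C_mul, coeff_mk, ha]

/-- `q ↦ -q` -/
theorem coeff_evalNeg (n : ℕ) (f : R⟦X⟧) : coeff n (evalNegHom f) = (-1) ^ n * coeff n f := by
  simp [evalNegHom]

end tools

theorem coeff_qqT (c : ℕ → ℤ) (k : ℕ) : coeff (k * k) (qqT c) = c k := by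
  simp [qqT]

theorem coeff_qqT' (c : ℕ → ℤ) (n : ℕ) (h : ¬ IsSquare n) : coeff n (qqT c) = 0 := by
  simp [qqT, h]

theorem qqT_ext (c : ℕ → ℤ) (f : ℤ⟦X⟧) (h1 : ∀ k, c k = coeff (k * k) f)
    (h2 : ∀ n, ¬ IsSquare n → coeff n f = 0) : qqT c = f := by
  ext n
  by_cases h : IsSquare n
  · obtain ⟨k, rfl⟩ := h
    rw [coeff_qqT, h1]
  · rw [coeff_qqT' _ _ h, h2 n h]

theorem qqT_add (c d : ℕ → ℤ) : qqT c + qqT d = qqT (fun k ↦ c k + d k) := by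
  symm
  apply qqT_ext
  · intro k; simp [coeff_qqT]
  · intro n h; simp [coeff_qqT' _ _ h]

theorem qqT_sub (c d : ℕ → ℤ) : qqT c - qqT d = qqT (fun k ↦ c k - d k) := by
  symm
  apply qqT_ext
  · intro k; simp [coeff_qqT]
  · intro n h; simp [coeff_qqT' _ _ h]

theorem qqT_smul (a : ℤ) (d : ℕ → ℤ) : (a : ℤ⟦X⟧) * qqT d = qqT (fun k ↦ a * d k) := by
  have : (a : ℤ⟦X⟧) = C a := by simp
  rw [this]
  symm
  apply qqT_ext
  · intro k; rw [coeff_C_mul, coeff_qqT]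
  · intro n h; rw [coeff_C_mul, coeff_qqT' _ _ h, mul_zero]

theorem qqT_expand (m M : ℕ) [NeZero M] (h : M = m * m) (c : ℕ → ℤ) :
    qe M (qqT c) = qqT (fun k ↦ if m ∣ k then c (k / m) else 0) := by
  have hm : 0 < m := by
    rcases Nat.eq_zero_or_pos m with rfl | h0
    · exact absurd h (by simpa using NeZero.ne M)
    · exact h0
  subst h
  symm
  apply qqT_ext
  · intro k
    rw [coeff_expand]
    by_cases hk : m ∣ k
    · obtain ⟨j, rfl⟩ := hk
      rw [if_pos (dvd_mul_right _ _), if_pos (mul_dvd_mul (dvd_mul_right _ _) (dvd_mul_right _ _)),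
        Nat.mul_div_cancel_left _ hm, mul_mul_mul_comm, Nat.mul_div_cancel_left _ (by positivity),
        coeff_qqT]
    · rw [if_neg hk, if_neg]
      rwa [← sq, ← sq, Nat.pow_dvd_pow_iff two_ne_zero]
  · intro n hn
    rw [coeff_expand]
    split_ifs with hd
    · obtain ⟨j, rfl⟩ := hd
      rw [Nat.mul_div_cancel_left _ (by positivity)]
      apply coeff_qqT'
      rintro ⟨i, rfl⟩
      exact hn ⟨m * i, by ring⟩
    · rfl

theorem qS_qqT (m r : ℕ) (c : ℕ → ℤ) (h : ∀ k, c k ≠ 0 → (k * k) % m = r % m) :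
    qS m r (qqT c) := by
  intro n hn
  by_cases hs : IsSquare n
  · obtain ⟨k, rfl⟩ := hs
    rw [coeff_qqT]
    by_contra h0
    exact hn (h k h0)
  · exact coeff_qqT' _ _ hs

/-- coefficients of `φ(q)` -/
def qqy (k : ℕ) : ℤ := if k = 0 then 1 else 2

/-- odd indices -/
def qqo (k : ℕ) : ℤ := if k % 2 = 1 then 1 else 0

theorem qqy_coeff (N d : ℕ) (h : d ≤ N) : coeff d (qqT qqy) =
    coeff d (∑ k ∈ Finset.Icc (-(N : ℤ)) N, (X : ℤ⟦X⟧) ^ (k.natAbs * k.natAbs)) := by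
  simp only [map_sum, coeff_X_pow]
  by_cases hs : IsSquare d
  · obtain ⟨r, rfl⟩ := hs
    rw [coeff_qqT, Finset.sum_boole]
    have hr : r ≤ r * r := by nlinarith
    have : (Finset.Icc (-(N : ℤ)) N).filter (fun k ↦ r * r = k.natAbs * k.natAbs) =
        {(r : ℤ), -(r : ℤ)} := by
      ext k
      simp only [Finset.mem_filter, Finset.mem_Icc, Finset.mem_insert, Finset.mem_singleton]
      constructor
      · rintro ⟨_, h2⟩
        have : r = k.natAbs := Nat.mul_self_inj.mp h2
        omega
      · intro h2
        have : r = k.natAbs := by omega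
        refine ⟨by omega, by rw [this]⟩
    rw [this, qqy]
    split_ifs with h0
    · subst h0; simp
    · rw [Finset.card_pair (by omega)]; simp
  · rw [coeff_qqT' _ _ hs]
    symm
    refine Finset.sum_eq_zero fun k _ ↦ ?_
    rw [if_neg]
    rintro rfl
    exact hs ⟨_, rfl⟩

theorem qqy_sq_coeff (N d : ℕ) (h : d ≤ N) : coeff d (qqT qqy * qqT qqy) =
    (((Finset.Icc (-(N : ℤ)) N) ×ˢ (Finset.Icc (-(N : ℤ)) N)).filter
      (fun p ↦ p.1 * p.1 + p.2 * p.2 = (d : ℤ))).card := by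
  have h1 : coeff d (qqT qqy * qqT qqy) =
    coeff d ((∑ k ∈ Finset.Icc (-(N : ℤ)) N, (X : ℤ⟦X⟧) ^ (k.natAbs * k.natAbs)) *
      (∑ k ∈ Finset.Icc (-(N : ℤ)) N, (X : ℤ⟦X⟧) ^ (k.natAbs * k.natAbs))) := by
    rw [coeff_mul, coeff_mul]
    refine Finset.sum_congr rfl fun p hp ↦ ?_
    rw [Finset.HasAntidiagonal.mem_antidiagonal] at hp
    rw [qqy_coeff N _ (by omega), qqy_coeff N _ (by omega)]
  rw [h1, Finset.sum_mul_sum, ← Finset.sum_product', map_sum]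
  simp_rw [← pow_add, coeff_X_pow]
  rw [Finset.sum_boole]
  congr 2
  ext p
  simp only [Finset.mem_filter]
  refine and_congr_right fun _ ↦ ?_
  zify
  simp only [abs_mul_abs_self]
  exact eq_comm

theorem qq_r2 (m : ℕ) : coeff (2 * m) (qqT qqy * qqT qqy) = coeff m (qqT qqy * qqT qqy) := by
  rw [qqy_sq_coeff (2 * m) _ le_rfl, qqy_sq_coeff (2 * m) m (by omega)]
  congr 1
  symm
  apply Finset.card_bij (fun p _ ↦ (p.1 + p.2, p.1 - p.2))
  · rintro ⟨a, b⟩ h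
    simp only [Finset.mem_filter, Finset.mem_product, Finset.mem_Icc] at h ⊢
    push_cast at h ⊢
    have h3 : (a + b) * (a + b) + (a - b) * (a - b) = 2 * (m : ℤ) := by linarith [h.2]
    refine ⟨⟨⟨?_, ?_⟩, ?_, ?_⟩, h3⟩ <;>
      nlinarith [mul_self_nonneg (a + b), mul_self_nonneg (a - b), mul_self_nonneg (a + b - 1),
        mul_self_nonneg (a + b + 1), mul_self_nonneg (a - b - 1), mul_self_nonneg (a - b + 1),
        Int.le_self_sq (a + b), Int.le_self_sq (a - b), Int.le_self_sq (-(a + b)),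
        Int.le_self_sq (-(a - b))]
  · rintro ⟨a, b⟩ _ ⟨c, d⟩ _ h
    simp only [Prod.mk.injEq] at h ⊢
    omega
  · rintro ⟨a, b⟩ h
    simp only [Finset.mem_filter, Finset.mem_product, Finset.mem_Icc] at h
    push_cast at h
    have hev : Even (a + b) := by
      have : Even (a * a + b * b) := by rw [h.2]; exact even_two_mul _
      rw [Int.even_add, Int.even_mul, Int.even_mul] at this
      rw [Int.even_add]; tauto
    obtain ⟨t, ht⟩ := hev
    have hb : b = t + t - a := by omega
    subst hb
    refine ⟨(t, a - t), ?_, ?_⟩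
    · simp only [Finset.mem_filter, Finset.mem_product, Finset.mem_Icc]
      push_cast
      have h3 : t * t + (a - t) * (a - t) = (m : ℤ) := by linarith [h.2]
      refine ⟨⟨⟨?_, ?_⟩, ?_, ?_⟩, h3⟩ <;>
        nlinarith [mul_self_nonneg t, mul_self_nonneg (a - t),
          Int.le_self_sq t, Int.le_self_sq (a - t), Int.le_self_sq (-t),
        Int.le_self_sq (-(a - t))]
    · simp only [Prod.mk.injEq]
      omega

theorem qq_x_evalNeg : evalNegHom (qqT qqy) = qqT qqc := by
  symm
  apply qqT_ext
  · intro k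
    rw [coeff_evalNeg, coeff_qqT, qqc, qqy]
    split_ifs with h
    · subst h; simp
    · rcases Nat.even_or_odd k with h | h
      · rw [h.neg_one_pow, (h.mul_left k).neg_one_pow]; ring
      · rw [h.neg_one_pow, (h.mul h).neg_one_pow]; ring
  · intro n hn
    rw [coeff_evalNeg, coeff_qqT' _ _ hn, mul_zero]

theorem qq_fund : qqT qqc * qqT qqc + qqT qqy * qqT qqy =
    2 * (qe 2 (qqT qqy) * qe 2 (qqT qqy)) := by
  rw [← map_mul, ← qq_x_evalNeg, ← map_mul]
  generalize hf : qqT qqy * qqT qqy = f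
  have h2 : (2 : ℤ⟦X⟧) = C 2 := by simp
  rw [h2]
  ext n
  rw [map_add, coeff_evalNeg, coeff_C_mul, coeff_expand]
  split_ifs with h
  · obtain ⟨m, rfl⟩ := h
    have := qq_r2 m
    rw [hf] at this
    rw [Nat.mul_div_cancel_left _ (by norm_num), this, pow_mul]
    norm_num
    ring
  · have : Odd n := by rwa [← Nat.not_even_iff_odd, even_iff_two_dvd]
    rw [this.neg_one_pow]; ring

theorem qq_y_split : qqT qqy = qe 4 (qqT qqy) + 2 * qqT qqo := by
  have := qqT_smul 2 qqo
  push_cast at this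
  rw [this, qqT_expand 2 4 rfl, qqT_add]
  congr 1
  ext k
  simp only [qqy, qqo]
  split_ifs <;> omega

theorem qq_x_split : qqT qqc = qe 4 (qqT qqy) - 2 * qqT qqo := by
  have := qqT_smul 2 qqo
  push_cast at this
  rw [this, qqT_expand 2 4 rfl, qqT_sub]
  congr 1
  ext k
  simp only [qqy, qqo, qqc]
  rcases Nat.even_or_odd k with h | h
  · rw [h.neg_one_pow, Nat.even_iff] at *
    split_ifs <;> omega
  · rw [h.neg_one_pow, Nat.odd_iff] at *
    split_ifs <;> omega

theorem qq_psi_sq : qqT qqo * qqT qqo = qe 8 (qqT qqy) * qe 2 (qqT qqo) := by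
  have h1 := qq_fund
  have h2 := congrArg (qe 2) h1
  have h3 := congrArg (qe 2) qq_y_split
  have h4 := congrArg (qe 2) qq_x_split
  simp only [map_add, map_sub, map_mul, map_ofNat, qe_qe 2 4 8 rfl, qe_qe 2 2 4 rfl] at h2 h3 h4
  have hy := qq_y_split
  have hx := qq_x_split
  generalize qe 4 (qqT qqy) = E at *
  generalize qe 8 (qqT qqy) = E8 at *
  generalize qe 2 (qqT qqo) = p2 at *
  generalize qe 2 (qqT qqy) = s at *
  generalize qe 2 (qqT qqc) = u at *
  generalize qqT qqy = y at *
  generalize qqT qqc = x at *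
  generalize qqT qqo = p at *
  subst hy hx h3 h4
  have h8 : (8 : ℤ⟦X⟧) ≠ 0 := fun h ↦ by
    have := congrArg constantCoeff h
    rw [map_ofNat, map_zero] at this
    norm_num at this
  apply mul_left_cancel₀ h8
  linear_combination h1 + h2

theorem qq_xy : qqT qqc * qqT qqy = qe 2 (qqT qqc) * qe 2 (qqT qqc) := by
  have h1 := qq_fund
  have h2 := congrArg (qe 2) h1
  have h3 := congrArg (qe 2) qq_y_split
  have h4 := congrArg (qe 2) qq_x_split
  have hp := qq_psi_sq
  simp only [map_add, map_sub, map_mul, map_ofNat, qe_qe 2 4 8 rfl, qe_qe 2 2 4 rfl] at h2 h3 h4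
  have hy := qq_y_split
  have hx := qq_x_split
  generalize qe 4 (qqT qqy) = E at *
  generalize qe 8 (qqT qqy) = E8 at *
  generalize qe 2 (qqT qqo) = p2 at *
  generalize qe 2 (qqT qqy) = s at *
  generalize qe 2 (qqT qqc) = u at *
  generalize qqT qqy = y at *
  generalize qqT qqc = x at *
  generalize qqT qqo = p at *
  subst hy hx h3 h4
  have h8 : (2 : ℤ⟦X⟧) ≠ 0 := fun h ↦ by
    have := congrArg constantCoeff h
    rw [map_ofNat, map_zero] at this
    norm_num at this
  apply mul_left_cancel₀ h8
  linear_combination -8 * hp - h2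

theorem qe_map (p k : ℕ) [NeZero k] (f : ℤ⟦X⟧) : map (Int.castRingHom (ZMod p)) (qe k f) =
    qe k (map (Int.castRingHom (ZMod p)) f) := by
  ext n
  rw [coeff_map, coeff_expand, coeff_expand]
  split_ifs
  · rw [coeff_map]
  · simp

theorem qq_const3 (e : (ZMod 3)⟦X⟧) (h : qe 2 e = e) : e = C (constantCoeff e) := by
  have key : ∀ n, n ≠ 0 → coeff n e = 0 := by
    intro n
    induction n using Nat.strong_induction_on with
    | _ n ih =>
      intro hn
      rw [← h, coeff_expand]
      split_ifs with hd
      · apply ih <;> omega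
      · rfl
  ext n
  rw [coeff_C]
  split_ifs with hn
  · subst hn; simp
  · exact key n hn

/-- coefficients of `ω₁` -/
def qqw (k : ℕ) : ℤ := if k % 3 = 0 then 0 else (-1) ^ (k + 1)

theorem qq_alpha : qqT qqc - qe 9 (qqT qqc) = -(2 * qqT qqw) := by
  have h2 := qqT_smul (-2) qqw
  push_cast at h2
  rw [← neg_mul, h2, qqT_expand 3 9 rfl, qqT_sub]
  congr 1
  ext k
  simp only [qqc, qqw]
  by_cases h : k % 3 = 0
  · obtain ⟨j, rfl⟩ := Nat.dvd_of_mod_eq_zero h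
    rw [Nat.mul_div_cancel_left _ (by norm_num), if_pos h, if_pos (dvd_mul_right _ _), pow_mul]
    norm_num
  · rw [if_neg (by omega), if_neg (by omega), if_neg h]
    ring

theorem qS_w : qS 3 1 (qqT qqw) := by
  apply qS_qqT
  intro k hk
  have h3 : k % 3 ≠ 0 := by
    intro h
    exact hk (by simp [qqw, h])
  have : k % 3 = 1 ∨ k % 3 = 2 := by omega
  rcases this with h | h <;> rw [Nat.mul_mod, h]

theorem qS_map (p m r : ℕ) (f : ℤ⟦X⟧) (h : qS m r f) :
    qS m r (map (Int.castRingHom (ZMod p)) f) := by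
  intro n hn
  rw [coeff_map, h n hn, map_zero]

theorem qq_dbl3 : ∀ t : ZMod 3, t + t = 0 → t = 0 := by decide

theorem qq_mod3 (n : ℕ) : (3 : ℤ) ∣ Rbar 4 9 (18 * n + 12) := by
  have : Fact (Nat.Prime 3) := ⟨by norm_num⟩
  have hG := congrArg (map (Int.castRingHom (ZMod 3))) qqG_eq
  have hF := congrArg (map (Int.castRingHom (ZMod 3))) qq_fund
  have hXY := congrArg (map (Int.castRingHom (ZMod 3))) qq_xy
  change map _ (qqG * qqT qqc * qe 36 (qqT qqc)) = map _ (qe 4 (qqT qqc) * qe 9 (qqT qqc)) at hG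
  simp only [map_add, map_mul, qe_map, map_ofNat] at hG hF hXY
  have hxs : ∀ m, ¬ IsSquare m → coeff m (map (Int.castRingHom (ZMod 3)) (qqT qqc)) = 0 := by
    intro m hm
    rw [coeff_map, coeff_qqT' _ _ hm, map_zero]
  have hneg : evalNegHom (map (Int.castRingHom (ZMod 3)) (qqT qqc)) =
      map (Int.castRingHom (ZMod 3)) (qqT qqy) := by
    ext m
    rw [← qq_x_evalNeg, coeff_evalNeg, coeff_map, coeff_map, coeff_evalNeg]
    simp [← mul_assoc, ← mul_pow]
  have hx0 : constantCoeff (map (Int.castRingHom (ZMod 3)) (qqT qqc)) = 1 := by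
    have := coeff_qqT qqc 0
    rw [← coeff_zero_eq_constantCoeff_apply, coeff_map]
    rw [mul_zero] at this
    rw [this]; simp [qqc]
  have hy0 : constantCoeff (map (Int.castRingHom (ZMod 3)) (qqT qqy)) = 1 := by
    have := coeff_qqT qqy 0
    rw [← coeff_zero_eq_constantCoeff_apply, coeff_map]
    rw [mul_zero] at this
    rw [this]; simp [qqy]
  have hA := qS_map 3 3 1 _ (qS_neg (qS_mul (t := 1) (qS_two 3) qS_w rfl))
  rw [← qq_alpha, map_sub, qe_map] at hA
  suffices hmain : coeff (18 * n + 12) (map (Int.castRingHom (ZMod 3)) qqG) = 0 by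
    rw [coeff_map, qqG, coeff_mk, eq_intCast] at hmain
    exact (ZMod.intCast_zmod_eq_zero_iff_dvd _ 3).mp hmain
  generalize map (Int.castRingHom (ZMod 3)) qqG = G at *
  generalize map (Int.castRingHom (ZMod 3)) (qqT qqc) = x at *
  generalize map (Int.castRingHom (ZMod 3)) (qqT qqy) = y at *
  have three : (3 : (ZMod 3)⟦X⟧) = 0 := by
    have : (3 : (ZMod 3)⟦X⟧) = C 3 := by rw [map_ofNat]
    rw [this, show (3 : ZMod 3) = 0 from rfl, map_zero]
  have f3 : ∀ f : (ZMod 3)⟦X⟧, qe 3 f = f ^ 3 := fun f ↦ qe_frob 3 f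
  have f9 : ∀ f : (ZMod 3)⟦X⟧, qe 9 f = f ^ 9 := by
    intro f
    rw [← qe_qe 3 3 9 rfl, f3, f3, ← pow_mul]
  rw [f9] at hA
  have hx : x ≠ 0 := by rintro rfl; simp at hx0
  have hz0 : constantCoeff (qe 4 x) = 1 := by rw [constantCoeff_expand, hx0]
  have hz : qe 4 x ≠ 0 := by intro h; rw [h] at hz0; simp at hz0
  rw [← qe_qe 9 4 36 rfl, f9, f9] at hG
  have hG2 : G * qe 4 x ^ 9 = qe 4 x * x ^ 8 := by
    apply mul_left_cancel₀ hx
    linear_combination hG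
  -- fourth powers
  have he : x ^ 4 + y ^ 4 = 2 := by
    have h1 : qe 2 (x ^ 4 + y ^ 4) = x ^ 4 + y ^ 4 := by
      rw [map_add, map_pow, map_pow]
      linear_combination (-(x * x + y * y) - 2 * (qe 2 y * qe 2 y)) * hF +
        2 * (x * y + qe 2 x * qe 2 x) * hXY + (qe 2 x ^ 4 - qe 2 y ^ 4) * three
    have h2 := qq_const3 _ h1
    rw [h2]
    simp only [map_add, map_pow, hx0, hy0]
    simp
    norm_num
  have hu4 : qe 2 x ^ 4 = x ^ 2 * y ^ 2 := by linear_combination (-x * y - qe 2 x * qe 2 x) * hXY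
  -- even part
  have hJ : qe 4 x * x ^ 8 + evalNegHom (qe 4 x * x ^ 8) = qe 2 (qe 2 x + qe 2 x * x ^ 8) := by
    have hz4 : evalNegHom (qe 4 x) = qe 4 x := by
      ext m
      rw [coeff_evalNeg, coeff_expand]
      split_ifs with h
      · obtain ⟨j, rfl⟩ := h
        rw [pow_mul]; norm_num
      · rw [mul_zero]
    rw [map_mul, hz4, map_pow, hneg, map_add, map_mul, map_pow, qe_qe 2 2 4 rfl]
    linear_combination qe 4 x * (x ^ 4 + y ^ 4 + 2) * he + qe 4 x * three
      + 2 * qe 4 x * (qe 2 x ^ 4 + x ^ 2 * y ^ 2) * hu4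
      - qe 4 x * (qe 2 x ^ 8) * three
  -- residue 0 mod 3
  have hB : qS 3 2 (qe 2 x - qe 2 x ^ 9) := by
    rw [← map_pow, ← map_sub]
    exact qS_qe 2 2 hA rfl
  have hZ : qR 3 0 (qe 2 x * x ^ 2) = qe 2 x ^ 9 * x ^ 6 := by
    obtain ⟨a, ha⟩ : ∃ a, a = x - x ^ 9 := ⟨_, rfl⟩
    obtain ⟨b, hb⟩ : ∃ b, b = qe 2 x - qe 2 x ^ 9 := ⟨_, rfl⟩
    have hx9 : qS 3 0 (x ^ 9) := by rw [← f9]; exact qS_expand 3 9 (by norm_num) _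
    have hu9 : qS 3 0 (qe 2 x ^ 9) := by rw [← f9]; exact qS_expand 3 9 (by norm_num) _
    rw [← ha] at hA
    rw [← hb] at hB
    have e1 : qe 2 x * x ^ 2 = qe 2 x ^ 9 * (x ^ 9 * x ^ 9) + 2 * (x ^ 9 * (a * b))
        + 2 * (qe 2 x ^ 9 * (x ^ 9 * a)) + qe 2 x ^ 9 * (a * a) + b * (x ^ 9 * x ^ 9)
        + b * (a * a) := by
      rw [ha, hb]; ring
    have s1 : qS 3 0 (qe 2 x ^ 9 * (x ^ 9 * x ^ 9)) := qS_mul hu9 (qS_mul (t := 0) hx9 hx9 rfl) rfl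
    have s2 : qS 3 0 (2 * (x ^ 9 * (a * b))) :=
      qS_mul (qS_two 3) (qS_mul (t := 0) hx9 (qS_mul (t := 0) hA hB rfl) rfl) rfl
    have s3 : qS 3 1 (2 * (qe 2 x ^ 9 * (x ^ 9 * a))) :=
      qS_mul (qS_two 3) (qS_mul (t := 1) hu9 (qS_mul (t := 1) hx9 hA rfl) rfl) rfl
    have s4 : qS 3 2 (qe 2 x ^ 9 * (a * a)) := qS_mul hu9 (qS_mul (t := 2) hA hA rfl) rfl
    have s5 : qS 3 2 (b * (x ^ 9 * x ^ 9)) := qS_mul hB (qS_mul (t := 0) hx9 hx9 rfl) rfl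
    have s6 : qS 3 1 (b * (a * a)) := qS_mul hB (qS_mul (t := 2) hA hA rfl) rfl
    rw [e1]
    simp only [map_add]
    rw [qR_self s1, qR_self s2, qR_zero s3 (by norm_num), qR_zero s4 (by norm_num),
      qR_zero s5 (by norm_num), qR_zero s6 (by norm_num), ha, hb]
    have hu8 : qe 2 x ^ 8 = x ^ 4 * y ^ 4 := by
      linear_combination (qe 2 x ^ 4 + x ^ 2 * y ^ 2) * hu4
    have hy4 : y ^ 4 = 2 - x ^ 4 := by linear_combination he
    generalize qe 2 x = u at *
    have k1 : x ^ 4 * (u ^ 8 * x ^ 8 + 2 * (1 - x ^ 8) * (1 - u ^ 8)) = u ^ 8 := by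
      rw [hu8, hy4]
      linear_combination (x ^ 4 * (2 - x ^ 4) * x ^ 12 - x ^ 8) * three
    linear_combination x ^ 6 * u * k1
  have key : ∀ n : ℕ, coeff (18 * n + 12) (qe 4 x * x ^ 8) = 0 := by
    intro n
    have h6 : coeff (9 * n + 6) (qe 2 x * x ^ 8) = 0 := by
      have e2 : qR 3 0 (qe 2 x * x ^ 8) = x ^ 3 * (qe 2 x * x) ^ 9 := by
        have : qe 2 x * x ^ 8 = qe 2 x * x ^ 2 * qe 3 (x ^ 2) := by rw [f3]; ring
        rw [this, qR_mul (qS_expand 3 3 dvd_rfl _), hZ, f3]; ring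
      have e3 : qR 9 6 (x ^ 3 * (qe 2 x * x) ^ 9) = 0 := by
        rw [← f9, qR_mul (qS_expand 9 9 dvd_rfl _)]
        convert zero_mul _
        ext m
        rw [coeff_qR, map_zero, ← f3, coeff_expand]
        split_ifs with h1 h2
        · apply hxs
          rintro ⟨k, hk⟩
          have h3 : (k * k) % 3 = 2 := by omega
          have : k % 3 = 0 ∨ k % 3 = 1 ∨ k % 3 = 2 := by omega
          rcases this with h | h | h <;> rw [Nat.mul_mod, h] at h3 <;> omega
        · rfl
        · rfl
      have e4 := congrArg (coeff (9 * n + 6)) e3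
      rw [← e2, coeff_qR, if_pos (by omega), coeff_qR, if_pos (by omega), map_zero] at e4
      exact e4
    have h7 : coeff (9 * n + 6) (qe 2 x) = 0 := by
      rw [coeff_expand]
      split_ifs with h1
      · apply hxs
        rintro ⟨k, hk⟩
        have h3 : (2 * (k * k)) % 9 = 6 := by omega
        have : k % 9 < 9 := Nat.mod_lt _ (by norm_num)
        rw [Nat.mul_mod, Nat.mul_mod k k] at h3
        generalize k % 9 = j at *
        interval_cases j <;> omega
      · rfl
    have h8 := congrArg (coeff (18 * n + 12)) hJ
    rw [show 18 * n + 12 = 2 * (9 * n + 6) by ring, coeff_expand_mul, map_add, map_add, h6, h7,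
      coeff_evalNeg, pow_mul] at h8
    have h9 : coeff (2 * (9 * n + 6)) (qe 4 x * x ^ 8) = 0 := by
      generalize coeff (2 * (9 * n + 6)) (qe 4 x * x ^ 8) = t at *
      simp at h8
      exact qq_dbl3 t h8
    rw [show 18 * n + 12 = 2 * (9 * n + 6) by ring]
    exact h9
  have hfin : qR 18 12 G * qe 4 x ^ 9 = 0 := by
    rw [← qR_mul, hG2]
    · ext m
      rw [coeff_qR, map_zero]
      split_ifs with h
      · rw [show m = 18 * (m / 18) + 12 by omega]
        exact key _
      · rfl
    · rw [← f9, qe_qe 9 4 36 rfl]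
      exact qS_expand 18 36 (by norm_num) _
  have h10 := (mul_eq_zero.mp hfin).resolve_right (pow_ne_zero _ hz)
  have h11 := congrArg (coeff (18 * n + 12)) h10
  rwa [coeff_qR, if_pos (by omega), map_zero] at h11

/-- odd, prime to 3 -/
def qqo3 (k : ℕ) : ℤ := if k % 2 = 1 ∧ k % 3 ≠ 0 then 1 else 0

/-- even, prime to 3 -/
def qqe3 (k : ℕ) : ℤ := if k % 2 = 0 ∧ k % 3 ≠ 0 then 1 else 0

theorem qqw_split : qqT qqw = qqT qqo3 - qqT qqe3 := by
  rw [qqT_sub]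
  congr 1
  ext k
  simp only [qqw, qqo3, qqe3, pow_succ]
  rcases Nat.even_or_odd k with h | h
  · rw [h.neg_one_pow]
    rw [Nat.even_iff] at h
    split_ifs <;> omega
  · rw [h.neg_one_pow]
    rw [Nat.odd_iff] at h
    split_ifs <;> omega

theorem qqe3_split : qqT qqe3 = qe 4 (qqT qqo3) + qe 4 (qqT qqe3) := by
  rw [qqT_expand 2 4 rfl, qqT_expand 2 4 rfl, qqT_add]
  congr 1
  ext k
  simp only [qqo3, qqe3]
  split_ifs <;> omega

theorem qqo_split : qqT qqo = qqT qqo3 + qe 9 (qqT qqo) := by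
  rw [qqT_expand 3 9 rfl, qqT_add]
  congr 1
  ext k
  simp only [qqo3, qqo]
  split_ifs <;> omega

theorem qqy_split3 : qqT qqy = qe 9 (qqT qqy) + 2 * (qqT qqo3 + qqT qqe3) := by
  have h2 := qqT_smul 2 (fun k ↦ qqo3 k + qqe3 k)
  push_cast at h2
  rw [qqT_expand 3 9 rfl, qqT_add, h2, qqT_add]
  congr 1
  ext k
  simp only [qqo3, qqe3, qqy]
  split_ifs <;> omega

theorem qS3 (c : ℕ → ℤ) (hc : ∀ k, k % 3 = 0 → c k = 0) : qS 3 1 (qqT c) := by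
  apply qS_qqT
  intro k hk
  have h3 : k % 3 ≠ 0 := fun h ↦ hk (hc k h)
  have : k % 3 = 1 ∨ k % 3 = 2 := by omega
  rcases this with h | h <;> rw [Nat.mul_mod, h]

theorem qS3o : qS 3 1 (qqT qqo3) := qS3 _ fun k hk ↦ by simp [qqo3, hk]

theorem qS3e : qS 3 1 (qqT qqe3) := qS3 _ fun k hk ↦ by simp [qqe3, hk]

theorem qS2o : qS 2 1 (qqT qqo3) := by
  apply qS_qqT
  intro k hk
  have : k % 2 = 1 := by
    by_contra h
    exact hk (by simp [qqo3, h])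
  rw [Nat.mul_mod, this]

theorem qS2oo : qS 2 1 (qqT qqo) := by
  apply qS_qqT
  intro k hk
  have : k % 2 = 1 := by
    by_contra h
    exact hk (by simp [qqo, h])
  rw [Nat.mul_mod, this]

theorem qS2e : qS 2 0 (qqT qqe3) := by
  rw [qqe3_split]
  exact qS_add (qS_expand 2 4 (by norm_num) _) (qS_expand 2 4 (by norm_num) _)

theorem qq_two_ne : (2 : ℤ⟦X⟧) ≠ 0 := fun h ↦ by
  have := congrArg constantCoeff h
  rw [map_ofNat, map_zero] at this
  norm_num at this

theorem qq_oO9 : qqT qqo3 * qe 9 (qqT qqo) = qe 2 (qqT qqe3) * qe 2 (qqT qqo3) := by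
  have h1 := qq_psi_sq
  have h2 := congrArg (qe 8) qqy_split3
  have h3 := congrArg (qe 2) qqe3_split
  have h4 := congrArg (qe 2) qqo_split
  have h5 := qqo_split
  simp only [map_add, map_mul, map_ofNat, qe_qe 2 4 8 rfl, qe_qe 8 9 72 rfl,
    qe_qe 2 9 18 rfl] at h2 h3 h4
  rw [← h3] at h2
  have so := qS3o
  have sO : qS 3 0 (qe 9 (qqT qqo)) := qS_expand 3 9 (by norm_num) _
  have sE : qS 3 0 (qe 72 (qqT qqy)) := qS_expand 3 72 (by norm_num) _
  have se2 : qS 3 2 (qe 2 (qqT qqe3)) := qS_qe 2 2 qS3e rfl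
  have so2 : qS 3 2 (qe 2 (qqT qqo3)) := qS_qe 2 2 qS3o rfl
  have sO2 : qS 3 0 (qe 18 (qqT qqo)) := qS_expand 3 18 (by norm_num) _
  rw [h2, h4] at h1
  generalize qe 9 (qqT qqo) = O at *
  generalize qe 72 (qqT qqy) = E at *
  generalize qe 2 (qqT qqe3) = e2 at *
  generalize qe 2 (qqT qqo3) = o2 at *
  generalize qe 18 (qqT qqo) = O2 at *
  rw [h5] at h1
  generalize qqT qqo3 = o at *
  have h6 : (o + O) * (o + O) = o * o + 2 * (o * O) + O * O := by ring
  have h7 : (E + 2 * e2) * (o2 + O2) = E * o2 + E * O2 + 2 * (e2 * o2) + 2 * (e2 * O2) := by ring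
  have h8 := congrArg (qR 3 1) h1
  rw [h6, h7] at h8
  simp only [map_add] at h8
  rw [qR_zero (qS_mul (t := 2) so so rfl) (by norm_num),
    qR_self (qS_mul (t := 1) (qS_two 3) (qS_mul (t := 1) so sO rfl) rfl),
    qR_zero (qS_mul (t := 0) sO sO rfl) (by norm_num),
    qR_zero (qS_mul (t := 2) sE so2 rfl) (by norm_num),
    qR_zero (qS_mul (t := 0) sE sO2 rfl) (by norm_num),
    qR_self (qS_mul (t := 1) (qS_two 3) (qS_mul (t := 1) se2 so2 rfl) rfl),
    qR_zero (qS_mul (t := 2) (qS_two 3) (qS_mul (t := 2) se2 sO2 rfl) rfl) (by norm_num)] at h8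
  apply mul_left_cancel₀ qq_two_ne
  linear_combination h8

theorem qq_F : ∃ f, qqT qqe3 ^ 2 * qe 4 (qqT qqo3) + qqT qqo3 ^ 2 * qe 4 (qqT qqe3) +
    qe 9 (qqT qqo) * qqT qqo3 * (qqT qqo3 ^ 2 + qqT qqe3 ^ 2) = 2 * f := by
  have : Fact (Nat.Prime 2) := ⟨by norm_num⟩
  apply qdvd 2
  have f2 : ∀ f : (ZMod 2)⟦X⟧, qe 2 f = f ^ 2 := fun f ↦ qe_frob 2 f
  have f4 : ∀ f : (ZMod 2)⟦X⟧, qe 4 f = f ^ 4 := by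
    intro f
    rw [← qe_qe 2 2 4 rfl, f2, f2, ← pow_mul]
  have h := congrArg (map (Int.castRingHom (ZMod 2))) qq_oO9
  simp only [map_add, map_mul, map_pow, qe_map, f4, f2] at h ⊢
  have hne : map (Int.castRingHom (ZMod 2)) (qqT qqo3) ≠ 0 := by
    intro h0
    have h1 := congrArg (coeff (1 * 1)) h0
    rw [coeff_map, coeff_qqT] at h1
    simp [qqo3] at h1
  have two : (2 : (ZMod 2)⟦X⟧) = 0 := by
    have : (2 : (ZMod 2)⟦X⟧) = C 2 := by rw [map_ofNat]
    rw [this, show (2 : ZMod 2) = 0 from rfl, map_zero]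
  generalize map (Int.castRingHom (ZMod 2)) (qqT qqo3) = o at *
  generalize map (Int.castRingHom (ZMod 2)) (qqT qqe3) = e at *
  generalize qe 9 (map (Int.castRingHom (ZMod 2)) (qqT qqo)) = O at *
  linear_combination (o ^ 2 + e ^ 2) * h + (e ^ 2 * o ^ 4 + o ^ 2 * e ^ 4) * two

/-- `ω₁²(ω₁ A - ω₂ B)` -/
noncomputable def qqK : ℤ⟦X⟧ := qqT qqw ^ 2 *
  (qqT qqw * qe 9 (qqT qqc) - qe 4 (qqT qqw) * qe 36 (qqT qqc))

theorem qq_x_one : ∃ t, qqT qqc = 1 + 2 * t := by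
  have h2 := qqT_smul 2 (fun k ↦ if k = 0 then 0 else (-1) ^ k)
  have h1 : (1 : ℤ⟦X⟧) = qqT (fun k ↦ if k = 0 then 1 else 0) := by
    symm
    apply qqT_ext
    · intro k
      rw [coeff_one]
      simp
    · intro n hn
      rw [coeff_one, if_neg]
      rintro rfl
      exact hn ⟨0, rfl⟩
  refine ⟨qqT (fun k ↦ if k = 0 then 0 else (-1) ^ k), ?_⟩
  push_cast at h2
  rw [h2, h1, qqT_add]
  congr 1
  ext k
  simp only [qqc]
  split_ifs <;> simp

theorem qqK_even : ∃ V, qR 2 0 qqK = 4 * V := by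
  obtain ⟨f, hf⟩ := qq_F
  obtain ⟨t, ht⟩ := qq_x_one
  have hw := qqw_split
  have hw2 := congrArg (qe 4) qqw_split
  have he := qqe3_split
  have hA := congrArg (qe 9) qq_x_split
  have hB := congrArg (qe 36) qq_y_split
  have hB2 := congrArg (qe 36) qq_x_split
  have ht2 := congrArg (qe 36) ht
  simp only [map_sub, map_add, map_mul, map_ofNat, map_one, qe_qe 9 4 36 rfl] at hw2 hA hB hB2 ht2
  have hB3 : qe 36 (qqT qqy) = qe 36 (qqT qqc) + 4 * qe 36 (qqT qqo) := by
    linear_combination hB - hB2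
  have sE : qS 2 0 (qe 36 (qqT qqy)) := qS_expand 2 36 (by norm_num) _
  have sB : qS 2 0 (qe 36 (qqT qqc)) := qS_expand 2 36 (by norm_num) _
  have sw : qS 2 0 (qe 4 (qqT qqw)) := qS_expand 2 4 (by norm_num) _
  have so := qS2o
  have se := qS2e
  have sO : qS 2 1 (qe 9 (qqT qqo)) := qS_qe 9 1 qS2oo rfl
  clear hB hB2
  rw [qqK]
  generalize qe 36 (qqT qqc) = B at *
  generalize qe 36 (qqT qqo) = b at *
  generalize qe 36 (qqT qqy) = E at *
  generalize qe 9 (qqT qqc) = A at *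
  generalize qe 9 (qqT qqo) = O at *
  generalize qe 36 t = s at *
  generalize qe 4 (qqT qqw) = w2 at *
  generalize qe 4 (qqT qqo3) = o4 at *
  generalize qe 4 (qqT qqe3) = e4 at *
  generalize qqT qqo3 = o at *
  generalize qqT qqe3 = e at *
  generalize qqT qqw = w at *
  have e1 : w ^ 2 * (w * A - w2 * B) =
      ((o * o + e * e) * (-(e * E) - 2 * (o * O) - w2 * B) - 2 * (o * e * (o * E + 2 * (e * O))))
      + ((o * o + e * e) * (o * E + 2 * (e * O)) -
        2 * (o * e * (-(e * E) - 2 * (o * O) - w2 * B))) := by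
    rw [hw, hA]; ring
  have two := qS_two (R := ℤ) 2
  have s1 : qS 2 0 (o * o + e * e) :=
    qS_add (qS_mul so so rfl) (qS_mul se se rfl)
  have s2 : qS 2 0 (-(e * E) - 2 * (o * O) - w2 * B) :=
    qS_sub (qS_sub (qS_neg (qS_mul se sE rfl)) (qS_mul two (qS_mul (t := 0) so sO rfl) rfl))
      (qS_mul sw sB rfl)
  have s3 : qS 2 1 (o * E + 2 * (e * O)) :=
    qS_add (qS_mul so sE rfl) (qS_mul two (qS_mul (t := 1) se sO rfl) rfl)
  have s4 : qS 2 1 (o * e) := qS_mul so se rfl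
  rw [e1, map_add, qR_self (qS_sub (qS_mul s1 s2 rfl) (qS_mul two (qS_mul (t := 0) s4 s3 rfl) rfl)),
    qR_zero (s := 1) (qS_sub (qS_mul s1 s3 rfl) (qS_mul two (qS_mul (t := 1) s4 s2 rfl) rfl))
      (by norm_num), add_zero]
  refine ⟨-E * o ^ 2 * o4 - (s + 2 * b) * (e ^ 2 * o4 + o ^ 2 * e4) + b * w2 * (o ^ 2 + e ^ 2)
    - o * e ^ 2 * O - f, ?_⟩
  rw [hw2, hB3, ht2]
  linear_combination (-(o ^ 2 + e ^ 2) - 2 * o ^ 2) * (1 + 2 * s + 4 * b) * he - 2 * hf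

theorem qq_Gd : ∃ W, qR 3 0 qqG - 1 = 8 * qqK + 32 * W := by
  have hG := qqG_eq
  change qqG * qqT qqc * qe 36 (qqT qqc) = qe 4 (qqT qqc) * qe 9 (qqT qqc) at hG
  have h1 := qq_alpha
  have h2 := congrArg (qe 4) qq_alpha
  obtain ⟨t, ht⟩ := qq_x_one
  have ht9 := congrArg (qe 9) ht
  have ht36 := congrArg (qe 36) ht
  simp only [map_neg, map_sub, map_add, map_mul, map_ofNat, map_one, qe_qe 4 9 36 rfl] at h2 ht9 ht36
  have sA : qS 3 0 (qe 9 (qqT qqc)) := qS_expand 3 9 (by norm_num) _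
  have sB : qS 3 0 (qe 36 (qqT qqc)) := qS_expand 3 36 (by norm_num) _
  have sw := qS_w
  have sw2 : qS 3 1 (qe 4 (qqT qqw)) := qS_qe 4 1 qS_w rfl
  rw [qqK]
  generalize qe 9 (qqT qqc) = A at *
  generalize qe 36 (qqT qqc) = B at *
  generalize qe 4 (qqT qqc) = z at *
  generalize qe 4 (qqT qqw) = w2 at *
  generalize qe 9 t = a at *
  generalize qe 36 t = b at *
  clear ht
  generalize qqT qqc = x at *
  generalize qqT qqw = w at *
  generalize qqG = G at *
  have hx : x = A - 2 * w := by linear_combination h1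
  have hz : z = B - 2 * w2 := by linear_combination h2
  subst hx hz
  have e1 : G * ((A * (A * A) - 2 * (2 * (2 * (w * (w * w))))) * B) =
      (B * (A * (A * A)) - 2 * (2 * (2 * (A * (w2 * (w * w))))))
      + 2 * (B * (A * (A * w)) - A * (A * (A * w2))) +
      2 * (2 * (B * (A * (w * w)) - A * (A * (w2 * w)))) := by
    linear_combination (A ^ 2 + 2 * A * w + 4 * w ^ 2) * hG
  have two := qS_two (R := ℤ) 3
  have sAA : qS 3 0 (A * A) := qS_mul sA sA rfl
  have sA3 : qS 3 0 (A * (A * A)) := qS_mul sA sAA rfl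
  have sww : qS 3 2 (w * w) := qS_mul sw sw rfl
  have s4 : qS 3 0 (A * (w2 * (w * w))) := qS_mul sA (qS_mul (t := 0) sw2 sww rfl) rfl
  have sC : qS 3 0 ((A * (A * A) - 2 * (2 * (2 * (w * (w * w))))) * B) :=
    qS_mul (r := 0) (qS_sub sA3 (qS_mul two (qS_mul (t := 0) two (qS_mul (t := 0) two
      (qS_mul (t := 0) sw sww rfl) rfl) rfl) rfl)) sB rfl
  have s0 : qS 3 0 (B * (A * (A * A)) - 2 * (2 * (2 * (A * (w2 * (w * w)))))) :=
    qS_sub (qS_mul sB sA3 rfl) (qS_mul two (qS_mul (t := 0) two (qS_mul (t := 0) two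
      s4 rfl) rfl) rfl)
  have s1 : qS 3 1 (2 * (B * (A * (A * w)) - A * (A * (A * w2)))) :=
    qS_mul (s := 1) two (qS_sub
      (qS_mul sB (qS_mul (t := 1) sA (qS_mul (t := 1) sA sw rfl) rfl) rfl)
      (qS_mul sA (qS_mul (t := 1) sA (qS_mul (t := 1) sA sw2 rfl) rfl) rfl)) rfl
  have s2 : qS 3 2 (2 * (2 * (B * (A * (w * w)) - A * (A * (w2 * w))))) :=
    qS_mul (s := 2) two (qS_mul (s := 2) two (qS_sub
      (qS_mul sB (qS_mul (t := 2) sA sww rfl) rfl)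
      (qS_mul sA (qS_mul (t := 2) sA (qS_mul (t := 2) sw2 sw rfl) rfl) rfl)) rfl) rfl
  have e2 := congrArg (qR 3 0) e1
  rw [qR_mul sC, map_add, map_add, qR_self s0, qR_zero s1 (by norm_num),
    qR_zero s2 (by norm_num), add_zero, add_zero] at e2
  generalize qR 3 0 G = g at *
  obtain ⟨D, hD⟩ : ∃ D, D = g - 1 := ⟨_, rfl⟩
  have hg : g = D + 1 := by rw [hD]; ring
  rw [← hD]
  subst hg
  obtain ⟨M, hM⟩ : ∃ M, M = w ^ 2 * (w * B - A * w2) * A * B := ⟨_, rfl⟩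
  obtain ⟨a2, ha2⟩ : ∃ a2, a2 = a + a ^ 2 := ⟨_, rfl⟩
  obtain ⟨b2, hb2⟩ : ∃ b2, b2 = b + b ^ 2 := ⟨_, rfl⟩
  have hAA : A ^ 2 = 1 + 4 * a2 := by rw [ht9, ha2]; ring
  have hBB : B ^ 2 = 1 + 4 * b2 := by rw [ht36, hb2]; ring
  obtain ⟨Y, hY⟩ : ∃ Y, (A * (A * A) - 2 * (2 * (2 * (w * (w * w))))) * B * A * B = 1 + 4 * Y := by
    refine ⟨2 * a2 + 4 * a2 ^ 2 + b2 * (1 + 4 * a2) ^ 2 - 2 * w ^ 3 * A * B ^ 2, ?_⟩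
    linear_combination (A ^ 2 * B ^ 2 + (1 + 4 * a2) * B ^ 2) * hAA + (1 + 4 * a2) ^ 2 * hBB
  have e3 : D * (1 + 4 * Y) = 8 * M := by
    rw [hM, ← hY]
    linear_combination A * B * e2
  have e4 : ∃ h, D = 8 * h := ⟨M - 4 * M * Y + 2 * Y ^ 2 * D, by
    linear_combination (1 - 4 * Y) * e3⟩
  obtain ⟨h, rfl⟩ := e4
  have hMK : M = w ^ 2 * (w * A - w2 * B) + 4 * (w ^ 2 * (w * A * b2 - w2 * B * a2)) := by
    rw [hM]
    linear_combination w ^ 3 * A * hBB - w ^ 2 * w2 * B * hAA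
  refine ⟨w ^ 2 * (w * A * b2 - w2 * B * a2) - h * Y, ?_⟩
  linear_combination e3 + 8 * hMK

theorem qq_mod32 (n : ℕ) : (32 : ℤ) ∣ Rbar 4 9 (18 * n + 12) := by
  obtain ⟨W, hW⟩ := qq_Gd
  obtain ⟨V, hV⟩ := qqK_even
  have h1 := congrArg (coeff (18 * n + 12)) hW
  have h2 := congrArg (coeff (18 * n + 12)) hV
  have c8 : (8 : ℤ⟦X⟧) = C 8 := by rw [map_ofNat]
  have c32 : (32 : ℤ⟦X⟧) = C 32 := by rw [map_ofNat]
  have c4 : (4 : ℤ⟦X⟧) = C 4 := by rw [map_ofNat]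
  rw [c4, coeff_C_mul, coeff_qR, if_pos (by omega)] at h2
  rw [map_sub, map_add, c8, c32, coeff_C_mul, coeff_C_mul, coeff_qR, if_pos (by omega), h2,
    coeff_one, if_neg (by omega), qqG, coeff_mk] at h1
  exact ⟨coeff (18 * n + 12) V + coeff (18 * n + 12) W, by linarith⟩

theorem Rbar_four_nine_18n_12_mod_96 (n : ℕ) :
    Rbar 4 9 (18 * n + 12) ≡ 0 [MOD 96] := by
  have h3 := qq_mod3 n
  have h32 := qq_mod32 n
  rw [Nat.modEq_zero_iff_dvd]
  omega
end

section
/- For all integers n ≥ 0, the number of (4,9)-regular overpartitions satisfies R̄_{4,9}(18n+15) ≡ 0 (mod 48). -/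
section RB
open PowerSeries PowerSeries.WithPiTopology Finset Filter Topology

namespace RB

/-- finite Gauss identity -/
theorem gauss_fin {R : Type*} [CommRing R] (q : R) (n : ℕ) :
    (∏ i ∈ range n, (1 + q ^ (i + 1))) *
      (1 + ∑ s ∈ range n, 2 * (-1) ^ (s + 1) * q ^ ((s + 1) ^ 2)) =
    ∑ s ∈ range (n + 1), (-1) ^ s * q ^ (s * (n + 1)) *
      (∏ i ∈ Ico s n, (1 - q ^ (i + 1))) * (∏ i ∈ range s, (1 + q ^ i)) := by
  induction n with
  | zero => simp
  | succ n ih =>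
    have key : ∀ m, m ≤ n + 1 → ∑ s ∈ range m, ((-1) ^ s * q ^ (s * (n + 2)) *
      (∏ i ∈ Ico s (n + 1), (1 - q ^ (i + 1))) * (∏ i ∈ range s, (1 + q ^ i)) -
      (1 + q ^ (n + 1)) * ((-1) ^ s * q ^ (s * (n + 1)) *
      (∏ i ∈ Ico s n, (1 - q ^ (i + 1))) * (∏ i ∈ range s, (1 + q ^ i)))) =
      (-1) ^ m * q ^ (m * (n + 1)) * (1 - q ^ m) ^ 0 *
      (if m = 0 then 0 else ∏ i ∈ Ico (m - 1) n, (1 - q ^ (i + 1))) *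
        (∏ i ∈ range m, (1 + q ^ i)) := by
      intro m
      induction m with
      | zero => simp
      | succ m ihm =>
        intro hm
        rw [sum_range_succ, ihm (by omega)]
        have e1 : ∏ i ∈ Ico m (n + 1), (1 - q ^ (i + 1)) =
          (∏ i ∈ Ico m n, (1 - q ^ (i + 1))) * (1 - q ^ (n + 1)) := by
          rw [prod_Ico_succ_top (by omega)]
        rw [e1, prod_range_succ]
        have e2 : (if m = 0 then 0 else ∏ i ∈ Ico (m - 1) n, (1 - q ^ (i + 1))) =
          (1 - q ^ m) * ∏ i ∈ Ico m n, (1 - q ^ (i + 1)) := by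
          split_ifs with h
          · simp [h]
          · rw [prod_eq_prod_Ico_succ_bot (by omega)]
            rw [Nat.sub_add_cancel (by omega)]
        rw [e2]
        simp only [Nat.add_eq_zero_iff, one_ne_zero, and_false, if_false, Nat.add_sub_cancel]
        have e3 : q ^ (m * (n + 2)) = q ^ (m * (n + 1)) * q ^ m := by rw [← pow_add]; ring_nf
        have e4 : q ^ ((m + 1) * (n + 1)) = q ^ (m * (n + 1)) * q ^ (n + 1) := by
          rw [← pow_add]; ring_nf
        rw [e3, e4]
        ring
    have k := key (n + 1) le_rfl
    rw [sum_sub_distrib, ← mul_sum, ← ih] at k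
    rw [sum_range_succ _ (n + 1), sub_eq_iff_eq_add.mp k]
    rw [sum_range_succ _ n, prod_range_succ _ n]
    have e5 : ∏ i ∈ range (n + 1), (1 + q ^ i) = 2 * ∏ i ∈ range n, (1 + q ^ (i + 1)) := by
      rw [prod_range_succ']; simp; ring
    rw [e5]
    simp only [Nat.add_eq_zero_iff, one_ne_zero, and_false, if_false, Nat.add_sub_cancel]
    have e6 : q ^ ((n + 1) * (n + 1 + 1)) = q ^ ((n + 1) ^ 2) * q ^ (n + 1) := by
      rw [← pow_add]; ring_nf
    have e7 : q ^ ((n + 1) * (n + 1)) = q ^ ((n + 1) ^ 2) := by ring_nf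
    rw [e6, e7]
    simp
    ring

/-- The series `∑_{y ≥ 1} (-1)^y q^{y^2}`. -/
noncomputable def sq : ℤ⟦X⟧ := PowerSeries.mk fun n => if IsSquare n ∧ n ≠ 0 then (-1) ^ n else 0

/-- The theta series. -/
noncomputable def th : ℤ⟦X⟧ := 1 + 2 * sq

theorem coeff_sq_box (N n : ℕ) (h : n ≤ N) :
    coeff n sq = ∑ s ∈ range N, if (s + 1) ^ 2 = n then (-1 : ℤ) ^ n else 0 := by
  rw [sq, coeff_mk]
  split_ifs with h1
  · obtain ⟨⟨r, rfl⟩, h0⟩ := h1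
    have hr : r ≠ 0 := by rintro rfl; simp at h0
    rw [sum_eq_single (r - 1)]
    · rw [Nat.sub_add_cancel (by omega), if_pos (by ring)]
    · intro b _ hb
      rw [if_neg]
      intro h2
      have : b + 1 = r := by nlinarith
      omega
    · intro h3
      exfalso; apply h3
      rw [mem_range]
      have : r ≤ r * r := Nat.le_mul_self r
      omega
  · symm
    apply sum_eq_zero
    intro s _
    rw [if_neg]
    rintro rfl
    exact h1 ⟨⟨s + 1, by ring⟩, by positivity⟩

theorem coeff_th_fin (N n : ℕ) (h : n ≤ N) :
    coeff n (1 + ∑ s ∈ range N, 2 * (-1) ^ (s + 1) * (X : ℤ⟦X⟧) ^ ((s + 1) ^ 2)) = coeff n th := by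
  rw [th, map_add, map_add, map_sum]
  congr 1
  have : (2 : ℤ⟦X⟧) * sq = C (2 : ℤ) * sq := by simp
  rw [this, coeff_C_mul, coeff_sq_box N n h, mul_sum]
  apply sum_congr rfl
  intro s _
  have : (2 : ℤ⟦X⟧) * (-1) ^ (s + 1) = C ((2 : ℤ) * (-1) ^ (s + 1)) := by simp
  rw [this, coeff_C_mul, coeff_X_pow]
  by_cases hs : (s + 1) ^ 2 = n
  · subst hs
    simp only [if_true, mul_one]
    rw [mul_eq_mul_left_iff]; left
    rw [pow_two (s + 1), pow_mul]
    rcases neg_one_pow_eq_or ℤ (s + 1) with h | h <;> simp [h]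
  · rw [if_neg hs, if_neg (Ne.symm hs)]; simp

instance : TopologicalSpace ℤ := ⊥

theorem gauss {P M : ℤ⟦X⟧} (hP : HasProd (fun i ↦ (1 : ℤ⟦X⟧) - X ^ (i + 1)) P)
    (hM : HasProd (fun i ↦ (1 : ℤ⟦X⟧) + X ^ (i + 1)) M) : M * th = P := by
  have tP := hP.tendsto_prod_nat
  have tM := hM.tendsto_prod_nat
  have tT : Tendsto (fun N => (1 + ∑ s ∈ range N, 2 * (-1) ^ (s + 1) * (X : ℤ⟦X⟧) ^ ((s + 1) ^ 2)))
      atTop (𝓝 th) := by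
    rw [tendsto_iff_coeff_tendsto]
    exact fun d ↦ tendsto_atTop_of_eventually_const (i₀ := d) (fun N hN ↦ coeff_th_fin N d hN)
  have h1 := tM.mul tT
  refine tendsto_nhds_unique h1 ?_
  rw [tendsto_iff_coeff_tendsto] at tP ⊢
  intro d
  refine (tP d).congr' ?_
  filter_upwards [eventually_ge_atTop d] with N hN
  rw [gauss_fin, sum_range_succ', map_add, map_sum, sum_eq_zero]
  · simp
  · intro s _
    rw [show ((-1 : ℤ⟦X⟧)) ^ (s + 1) * X ^ ((s + 1) * (N + 1)) *
      (∏ i ∈ Ico (s + 1) N, (1 - X ^ (i + 1))) * (∏ i ∈ range (s + 1), (1 + X ^ i)) =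
      X ^ ((s + 1) * (N + 1)) * ((-1) ^ (s + 1) *
      (∏ i ∈ Ico (s + 1) N, (1 - X ^ (i + 1))) * (∏ i ∈ range (s + 1), (1 + X ^ i))) by ring]
    rw [coeff_X_pow_mul', if_neg]
    nlinarith

theorem hasProd_expand (k : ℕ) (hk : k ≠ 0) {f : ℕ → ℤ⟦X⟧} {F : ℤ⟦X⟧} (h : HasProd f F) :
    HasProd (fun i ↦ expand k hk (f i)) (expand k hk F) := by
  refine h.map (expand k hk) ?_
  rw [continuous_iff_continuousAt]
  intro x
  rw [ContinuousAt, tendsto_iff_coeff_tendsto]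
  intro d
  simp_rw [coeff_expand]
  split_ifs
  · exact (continuous_coeff ℤ (d / k)).tendsto x
  · exact tendsto_const_nhds

theorem hasProd_ite (k : ℕ) (hk : k ≠ 0) {f : ℕ → ℤ⟦X⟧} {F : ℤ⟦X⟧}
    (h : HasProd (fun i ↦ f (k * (i + 1))) F) :
    HasProd (fun i ↦ if k ∣ i + 1 then f (i + 1) else 1) F := by
  have inj : Function.Injective (fun i ↦ k * (i + 1) - 1) := by
    intro a b hab
    have h1 : 0 < k * (a + 1) := by positivity
    have h2 : 0 < k * (b + 1) := by positivity
    have : k * (a + 1) = k * (b + 1) := by simp only at hab; omega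
    have := Nat.eq_of_mul_eq_mul_left (by omega) this
    omega
  rw [← inj.hasProd_iff]
  · convert h using 2 with i
    have h1 : 0 < k * (i + 1) := by positivity
    simp [Nat.sub_add_cancel h1]
  · intro x hx
    rw [if_neg]
    rintro ⟨c, hc⟩
    apply hx
    have : c ≠ 0 := by rintro rfl; simp at hc
    refine ⟨c - 1, ?_⟩
    simp only
    rw [Nat.sub_add_cancel (by omega), ← hc]; simp

theorem hasProd_regular (p : ℕ → Prop) [DecidablePred p] :
    HasProd (fun i ↦ if p (i + 1) then ∑' j : ℕ, (X : ℤ⟦X⟧) ^ ((i + 1) * j) else 1)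
    (PowerSeries.mk fun n ↦ (Fintype.card {q : n.Partition // ∀ i ∈ q.parts, p i} : ℤ)) := by
  convert! Nat.Partition.hasProd_powerSeriesMk_card_restricted ℤ p using 4 with n
  rw [Fintype.card_subtype]; rfl

theorem hasProd_distinct (p : ℕ → Prop) [DecidablePred p] :
    HasProd (fun i ↦ if p (i + 1) then (1 : ℤ⟦X⟧) + X ^ (i + 1) else 1)
    (PowerSeries.mk fun n ↦
      (Fintype.card {q : n.Partition // q.parts.Nodup ∧ ∀ i ∈ q.parts, p i} : ℤ)) := by
  convert! Nat.Partition.hasProd_genFun (fun i c ↦ if p i ∧ c < 2 then (1 : ℤ) else 0) using 1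
  · ext1 i
    split_ifs with h
    · congr 1
      rw [tsum_eq_single 0]
      · simp only [h, true_and, zero_add, Nat.one_lt_ofNat, if_true, mul_one]
        exact (one_smul ℤ _).symm
      · intro b hb
        rw [if_neg (by omega)]
        exact zero_smul ℤ _
    · simp only [h, false_and, if_false]
      symm
      rw [add_eq_left]
      refine (tsum_congr fun j ↦ ?_).trans tsum_zero
      exact zero_smul ℤ _
  · ext n
    rw [coeff_mk, Nat.Partition.coeff_genFun]
    simp_rw [Finsupp.prod, prod_boole]
    rw [Fintype.card_subtype, card_filter]
    push_cast
    apply sum_congr rfl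
    intro q _
    congr 1
    simp only [eq_iff_iff]
    constructor
    · rintro ⟨h1, h2⟩ i hi
      simp at hi
      refine ⟨h2 i hi, ?_⟩
      have := Multiset.nodup_iff_count_le_one.mp h1 i
      simp; omega
    · intro h
      simp at h
      refine ⟨Multiset.nodup_iff_count_le_one.mpr fun i ↦ ?_, fun i hi ↦ (h i hi).1⟩
      by_cases hi : i ∈ q.parts
      · have := (h i hi).2; omega
      · simp [hi]

theorem expand_ne_zero' (k : ℕ) (hk : k ≠ 0) {F : ℤ⟦X⟧} (h : F ≠ 0) : expand k hk F ≠ 0 := by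
  intro h0
  apply h
  ext n
  rw [← coeff_expand_mul k hk, h0]; simp

/-- The generating function. -/
noncomputable def G : ℤ⟦X⟧ := PowerSeries.mk fun n ↦ (Rbar 4 9 n : ℤ)

theorem G_eq : G * th * expand 36 (by norm_num) th =
    expand 4 (by norm_num) th * expand 9 (by norm_num) th := by
  have hA := hasProd_regular (fun i ↦ ¬ 4 ∣ i ∧ ¬ 9 ∣ i)
  have hB := hasProd_distinct (fun i ↦ ¬ 4 ∣ i ∧ ¬ 9 ∣ i)
  set A := (PowerSeries.mk fun n ↦
    (Fintype.card {q : n.Partition // ∀ i ∈ q.parts, ¬ 4 ∣ i ∧ ¬ 9 ∣ i} : ℤ)) with hAdef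
  set B := (PowerSeries.mk fun n ↦
      (Fintype.card {q : n.Partition // q.parts.Nodup ∧ ∀ i ∈ q.parts, ¬ 4 ∣ i ∧ ¬ 9 ∣ i} : ℤ))
      with hBdef
  have hG : G = A * B := by
    ext n
    rw [coeff_mul, G, coeff_mk, Rbar]
    push_cast
    apply sum_congr rfl
    intro x _
    rw [hAdef, hBdef, coeff_mk, coeff_mk]
    rfl
  have hP := (multipliable_one_sub_X_pow ℤ).hasProd
  have hP0 : ∏' n, ((1 : ℤ⟦X⟧) - X ^ (n + 1)) ≠ 0 := tprod_one_sub_X_pow_ne_zero ℤ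
  set P := ∏' n, ((1 : ℤ⟦X⟧) - X ^ (n + 1))
  have hM := hasProd_distinct (fun _ ↦ True)
  simp only [if_true] at hM
  set M := (PowerSeries.mk fun n ↦
      (Fintype.card {q : n.Partition // q.parts.Nodup ∧ ∀ i ∈ q.parts, True} : ℤ))
  have hg : M * th = P := gauss hP hM
  have hM0 : M ≠ 0 := by
    rintro h
    rw [h, zero_mul] at hg
    exact hP0 hg.symm
  have hPk : ∀ k (hk : k ≠ 0), HasProd (fun i ↦ if k ∣ i + 1 then (1 : ℤ⟦X⟧) - X ^ (i + 1) else 1)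
      (expand k hk P) := by
    intro k hk
    apply hasProd_ite k hk (f := fun i ↦ (1 : ℤ⟦X⟧) - X ^ i)
    convert hasProd_expand k hk hP using 2 with i
    simp [pow_mul]
  have hMk : ∀ k (hk : k ≠ 0), HasProd (fun i ↦ if k ∣ i + 1 then (1 : ℤ⟦X⟧) + X ^ (i + 1) else 1)
      (expand k hk M) := by
    intro k hk
    apply hasProd_ite k hk (f := fun i ↦ (1 : ℤ⟦X⟧) + X ^ i)
    convert hasProd_expand k hk hM using 2 with i
    simp [pow_mul]
  have hgk : ∀ k (hk : k ≠ 0), expand k hk M * expand k hk th = expand k hk P := by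
    intro k hk
    rw [← map_mul, hg]
  have I1 : A * P * expand 36 (by norm_num) P =
      expand 4 (by norm_num) P * expand 9 (by norm_num) P := by
    refine ((hA.mul hP).mul (hPk 36 (by norm_num))).unique ?_
    convert (hPk 4 (by norm_num)).mul (hPk 9 (by norm_num)) using 2 with i
    have e : (∑' j : ℕ, (X : ℤ⟦X⟧) ^ ((i + 1) * j)) * (1 - X ^ (i + 1)) = 1 := by
      simp_rw [pow_mul]
      exact tsum_pow_mul_one_sub_of_constantCoeff_eq_zero (by simp)
    have h36 : 36 ∣ i + 1 ↔ 4 ∣ i + 1 ∧ 9 ∣ i + 1 := by omega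
    simp only [h36]
    by_cases h4 : 4 ∣ i + 1 <;> by_cases h9 : 9 ∣ i + 1 <;> simp [h4, h9, e]
  have I2 : B * expand 4 (by norm_num) M * expand 9 (by norm_num) M =
      M * expand 36 (by norm_num) M := by
    refine ((hB.mul (hMk 4 (by norm_num))).mul (hMk 9 (by norm_num))).unique ?_
    convert hM.mul (hMk 36 (by norm_num)) using 2 with i
    have h36 : 36 ∣ i + 1 ↔ 4 ∣ i + 1 ∧ 9 ∣ i + 1 := by omega
    simp only [h36]
    by_cases h4 : 4 ∣ i + 1 <;> by_cases h9 : 9 ∣ i + 1 <;> simp [h4, h9]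
  have hne : M * expand 36 (by norm_num) M ≠ 0 := mul_ne_zero hM0 (expand_ne_zero' _ _ hM0)
  apply mul_right_cancel₀ hne
  have g4 := hgk 4 (by norm_num)
  have g9 := hgk 9 (by norm_num)
  have g36 := hgk 36 (by norm_num)
  rw [hG]
  rw [← g4, ← g9, ← g36, ← hg] at I1
  linear_combination B * I1 + expand 4 (by norm_num) th * expand 9 (by norm_num) th * I2

theorem coeff_mul_box {R ι κ : Type*} [CommRing R] (F K : R⟦X⟧) (N : ℕ) (B : Finset ι)
    (C : Finset κ) (f : ι → ℕ) (g : κ → ℕ) (w : ι → R) (v : κ → R)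
    (hF : ∀ n ≤ N, coeff n F = ∑ i ∈ B, if f i = n then w i else 0)
    (hK : ∀ n ≤ N, coeff n K = ∑ j ∈ C, if g j = n then v j else 0) :
    coeff N (F * K) = ∑ i ∈ B, ∑ j ∈ C, if f i + g j = N then w i * v j else 0 := by
  rw [coeff_mul]
  have : ∀ p ∈ antidiagonal N, coeff p.1 F * coeff p.2 K =
      ∑ i ∈ B, ∑ j ∈ C, if (f i, g j) = p then w i * v j else 0 := by
    intro p hp
    rw [HasAntidiagonal.mem_antidiagonal] at hp
    rw [hF p.1 (by omega), hK p.2 (by omega), sum_mul_sum]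
    refine sum_congr rfl fun i _ ↦ sum_congr rfl fun j _ ↦ ?_
    by_cases h1 : f i = p.1 <;> by_cases h2 : g j = p.2 <;> simp [h1, h2, Prod.ext_iff]
  rw [sum_congr rfl this, sum_comm]
  refine sum_congr rfl fun i _ ↦ ?_
  rw [sum_comm]
  refine sum_congr rfl fun j _ ↦ ?_
  rw [sum_ite_eq]
  simp

theorem exists_inv : ∃ I : ℤ⟦X⟧, th * I = 1 := by
  have : IsUnit th := by
    rw [PowerSeries.isUnit_iff_constantCoeff]
    have : constantCoeff sq = 0 := by
      rw [← coeff_zero_eq_constantCoeff_apply, sq, coeff_mk]; simp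
    simp [th, this]
  obtain ⟨u, hu⟩ := this
  exact ⟨(u⁻¹ : ℤ⟦X⟧ˣ), by rw [← hu]; simp⟩

theorem sq_mod9 (r : ℕ) : r * r % 9 = 0 ∨ r * r % 9 = 1 ∨ r * r % 9 = 4 ∨ r * r % 9 = 7 := by
  have : r % 9 < 9 := Nat.mod_lt _ (by norm_num)
  rw [Nat.mul_mod]
  interval_cases r % 9 <;> simp

/-- supported on squares mod 9 -/
def Q9 (F : ℤ⟦X⟧) : Prop := ∀ n, coeff n F ≠ 0 → n % 9 = 0 ∨ n % 9 = 1 ∨ n % 9 = 4 ∨ n % 9 = 7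

theorem Q9_sq : Q9 sq := by
  intro n hn
  rw [sq, coeff_mk] at hn
  split_ifs at hn with h
  · obtain ⟨⟨r, rfl⟩, _⟩ := h
    exact sq_mod9 r
  · simp at hn

theorem Q9_sq4 : Q9 (expand 4 (by norm_num) sq) := by
  intro n hn
  rw [coeff_expand] at hn
  split_ifs at hn with h
  · obtain ⟨m, rfl⟩ := h
    rw [Nat.mul_div_cancel_left _ (by norm_num)] at hn
    have := Q9_sq m hn
    omega
  · simp at hn

theorem Q9_one {F : ℤ⟦X⟧} (h : Q9 F) {N : ℕ} (hN : N % 9 = 6) : coeff N F = 0 := by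
  by_contra h0
  have := h N h0
  omega

theorem Q9_two {F K : ℤ⟦X⟧} (h : Q9 F) (h' : Q9 K) {N : ℕ} (hN : N % 9 = 6) :
    coeff N (F * K) = 0 := by
  rw [coeff_mul]
  apply sum_eq_zero
  intro p hp
  rw [HasAntidiagonal.mem_antidiagonal] at hp
  by_contra h0
  have h1 := h p.1 (left_ne_zero_of_mul h0)
  have h2 := h' p.2 (right_ne_zero_of_mul h0)
  omega

theorem frob (p : ℕ) [hp : Fact p.Prime] (F : (ZMod p)⟦X⟧) : F ^ p = expand p hp.out.ne_zero F := by
  have h := MvPowerSeries.map_frobenius_expand (σ := Unit) (R := ZMod p) p hp.out.ne_zero (f := F)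
  rw [ZMod.frobenius_zmod] at h
  rw [PowerSeries.expand, ← h]
  simp

/-- the involution on solutions of x^2 + 2 y^2 = N -/
def inv2 (p : ℕ × ℕ) : ℕ × ℕ :=
  if p.1 % 3 = p.2 % 3 then (((p.1 - 4 * p.2) + (4 * p.2 - p.1)) / 3, (2 * p.1 + p.2) / 3)
  else ((p.1 + 4 * p.2) / 3, ((2 * p.1 - p.2) + (p.2 - 2 * p.1)) / 3)

theorem ndvd {x y N : ℕ} (h : x ^ 2 + 2 * y ^ 2 = N) (hN : N % 9 = 6) : x % 3 ≠ 0 ∧ y % 3 ≠ 0 := by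
  have hx : x % 9 < 9 := Nat.mod_lt _ (by norm_num)
  have hy : y % 9 < 9 := Nat.mod_lt _ (by norm_num)
  have e1 : x % 3 = x % 9 % 3 := by omega
  have e2 : y % 3 = y % 9 % 3 := by omega
  have e3 : ((x % 9) ^ 2 + 2 * (y % 9) ^ 2) % 9 = 6 := by
    rw [← hN, ← h]
    simp [Nat.add_mod, Nat.mul_mod, Nat.pow_mod]
  rw [e1, e2]
  generalize x % 9 = a at *
  generalize y % 9 = b at *
  interval_cases a <;> interval_cases b <;> simp_all

theorem inv2_norm {x y N : ℕ} (h : x ^ 2 + 2 * y ^ 2 = N) (hN : N % 9 = 6) :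
    (inv2 (x, y)).1 ^ 2 + 2 * (inv2 (x, y)).2 ^ 2 = N := by
  obtain ⟨h1, h2⟩ := ndvd h hN
  have key : ((3 * ((inv2 (x, y)).1 : ℤ) = x - 4 * y ∨ 3 * ((inv2 (x, y)).1 : ℤ) = 4 * y - x) ∧
      3 * ((inv2 (x, y)).2 : ℤ) = 2 * x + y) ∨ (3 * ((inv2 (x, y)).1 : ℤ) = x + 4 * y ∧
      (3 * ((inv2 (x, y)).2 : ℤ) = 2 * x - y ∨ 3 * ((inv2 (x, y)).2 : ℤ) = y - 2 * x)) := by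
    rw [inv2]
    simp only
    split_ifs with h3
    · left; simp only; omega
    · right; simp only
      have hx3 : x % 3 = 1 ∨ x % 3 = 2 := by omega
      have hy3 : y % 3 = 1 ∨ y % 3 = 2 := by omega
      rcases hx3 with hx3 | hx3 <;> rcases hy3 with hy3 | hy3 <;> omega
  generalize (inv2 (x, y)).1 = a at *
  generalize (inv2 (x, y)).2 = b at *
  have : (9 : ℤ) * (a ^ 2 + 2 * b ^ 2) = 9 * N := by
    rw [← h]; push_cast
    have e : (9 : ℤ) * (a ^ 2 + 2 * b ^ 2) = (3 * a) ^ 2 + 2 * (3 * b) ^ 2 := by ring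
    rw [e]
    rcases key with ⟨h3 | h3, h4⟩ | ⟨h3, h4 | h4⟩ <;> rw [h3, h4] <;> ring
  have h5 : ((a : ℤ) ^ 2 + 2 * b ^ 2) = N := by linarith
  exact_mod_cast h5

theorem inv2_invol {x y N : ℕ} (h : x ^ 2 + 2 * y ^ 2 = N) (hN : N % 9 = 6) :
    inv2 (inv2 (x, y)) = (x, y) := by
  obtain ⟨h1, h2⟩ := ndvd h hN
  obtain ⟨h3, h4⟩ := ndvd (inv2_norm h hN) hN
  have e : inv2 (x, y) = ((inv2 (x, y)).1, (inv2 (x, y)).2) := rfl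
  have key : ((3 * ((inv2 (x, y)).1 : ℤ) = x - 4 * y ∨ 3 * ((inv2 (x, y)).1 : ℤ) = 4 * y - x) ∧
      3 * ((inv2 (x, y)).2 : ℤ) = 2 * x + y) ∨ (3 * ((inv2 (x, y)).1 : ℤ) = x + 4 * y ∧
      (3 * ((inv2 (x, y)).2 : ℤ) = 2 * x - y ∨ 3 * ((inv2 (x, y)).2 : ℤ) = y - 2 * x)) := by
    rw [inv2]
    simp only
    split_ifs with h3
    · left; simp only; omega
    · right; simp only
      have hx3 : x % 3 = 1 ∨ x % 3 = 2 := by omega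
      have hy3 : y % 3 = 1 ∨ y % 3 = 2 := by omega
      rcases hx3 with hx3 | hx3 <;> rcases hy3 with hy3 | hy3 <;> omega
  rw [e]
  generalize (inv2 (x, y)).1 = a at *
  generalize (inv2 (x, y)).2 = b at *
  rw [inv2]
  simp only
  rw [Prod.ext_iff]
  split_ifs with h5 <;> simp only <;> omega

theorem even_coeff {N : ℕ} (hN : N % 9 = 6) :
    (2 : ℤ) ∣ coeff N ((expand 4 (by norm_num) sq - sq) * sq ^ 2) := by
  refine (ZMod.intCast_zmod_eq_zero_iff_dvd _ 2).mp ?_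
  have e : ((coeff N ((expand 4 (by norm_num) sq - sq) * sq ^ 2) : ℤ) : ZMod 2) =
    coeff N (map (Int.castRingHom (ZMod 2)) (expand 4 (by norm_num) sq - sq) *
      expand 2 (by norm_num) (map (Int.castRingHom (ZMod 2)) sq)) := by
    rw [← frob 2, ← map_pow, ← map_mul, coeff_map]; rfl
  have neg : ∀ n : ℕ, (-1 : ZMod 2) ^ n = 1 := by
    intro n
    have : (-1 : ZMod 2) = 1 := by decide
    rw [this, one_pow]
  have csq : ∀ n, ((coeff n sq : ℤ) : ZMod 2) = if IsSquare n ∧ n ≠ 0 then 1 else 0 := by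
    intro n
    rw [sq, coeff_mk]
    split_ifs
    · push_cast; exact neg n
    · simp
  rw [e, coeff_mul_box _ _ N ((range (N + 1)).filter Odd) ((range (N + 1)).filter (· ≠ 0))
    (fun x ↦ x ^ 2) (fun y ↦ 2 * y ^ 2) (fun _ ↦ 1) (fun _ ↦ 1)]
  · rw [← sum_product', ← sum_filter]
    refine sum_involution (fun p _ ↦ inv2 p) ?_ ?_ ?_ ?_
    · intro p _
      decide
    · rintro ⟨x, y⟩ hp _ heq
      simp only [mem_filter, mem_product, mem_range] at hp
      obtain ⟨⟨⟨hx, hx'⟩, hy, hy'⟩, h⟩ := hp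
      have h1 := ndvd h hN
      rw [inv2] at heq
      simp only at heq
      obtain ⟨c, hc⟩ := hx'
      split_ifs at heq with h3
      · rw [Prod.ext_iff] at heq
        simp only at heq
        have hxy : x = y := by omega
        subst hxy
        have : x % 9 < 9 := Nat.mod_lt _ (by norm_num)
        have e3 : ((x % 9) ^ 2 + 2 * (x % 9) ^ 2) % 9 = 6 := by
          rw [← hN, ← h]
          simp [Nat.add_mod, Nat.mul_mod, Nat.pow_mod]
        generalize x % 9 = a at *
        interval_cases a <;> simp_all
      · rw [Prod.ext_iff] at heq
        simp only at heq
        omega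
    · rintro ⟨x, y⟩ hp
      simp only [mem_filter, mem_product, mem_range] at hp ⊢
      obtain ⟨⟨⟨hx, hx'⟩, hy, hy'⟩, h⟩ := hp
      have hn := inv2_norm h hN
      have h1 := ndvd h hN
      have h2 := ndvd hn hN
      refine ⟨⟨⟨?_, ?_⟩, ?_, ?_⟩, hn⟩
      · nlinarith
      · have hodd : Odd N := by
          rw [← h]
          exact (hx'.pow).add_even (even_two_mul _)
        rw [← hn] at hodd
        have := (Nat.odd_add.mp hodd).mpr (even_two_mul _)
        exact (Nat.odd_pow_iff (by norm_num)).mp this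
      · nlinarith
      · omega
    · rintro ⟨x, y⟩ hp
      simp only [mem_filter, mem_product, mem_range] at hp
      exact inv2_invol hp.2 hN
  · intro n hn
    rw [coeff_map, map_sub, map_sub, coeff_expand]
    simp only [eq_intCast]
    rw [csq]
    have hsum : (∑ i ∈ range (N + 1) with Odd i, if i ^ 2 = n then (1 : ZMod 2) else 0) =
      if IsSquare n ∧ Odd n then 1 else 0 := by
      split_ifs with h
      · obtain ⟨⟨r, rfl⟩, ho⟩ := h
        have hr : Odd r := (Nat.odd_mul.mp ho).1
        rw [sum_eq_single r]
        · rw [if_pos (by ring)]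
        · intro b _ hb
          rw [if_neg]
          intro h2
          apply hb; nlinarith
        · intro h3
          exfalso; apply h3
          have : r ≤ r * r := Nat.le_mul_self r
          simp only [mem_filter, mem_range]
          exact ⟨by omega, hr⟩
      · apply sum_eq_zero
        intro s hs
        simp only [mem_filter, mem_range] at hs
        rw [if_neg]
        rintro rfl
        exact h ⟨⟨s, by ring⟩, hs.2.pow⟩
    rw [hsum]
    by_cases h4 : 4 ∣ n
    · obtain ⟨m, rfl⟩ := h4
      rw [if_pos (dvd_mul_right _ _), Nat.mul_div_cancel_left _ (by norm_num), csq]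
      have : IsSquare (4 * m) ↔ IsSquare m := by
        constructor
        · rintro ⟨r, hr⟩
          have h2 : Even (r * r) := by rw [← hr]; exact ⟨2 * m, by ring⟩
          have : Even r := by rcases Nat.even_mul.mp h2 with h | h <;> exact h
          obtain ⟨c, rfl⟩ := this
          exact ⟨c, by nlinarith⟩
        · rintro ⟨r, rfl⟩
          exact ⟨2 * r, by ring⟩
      have ho : ¬ Odd (4 * m) := by
        rw [Nat.not_odd_iff_even]; exact ⟨2 * m, by ring⟩
      simp [this, ho]
    · rw [if_neg h4]
      have : (IsSquare n ∧ n ≠ 0) ↔ (IsSquare n ∧ Odd n) := by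
        constructor
        · rintro ⟨⟨r, rfl⟩, h0⟩
          refine ⟨⟨r, rfl⟩, ?_⟩
          rw [← Nat.not_even_iff_odd]
          intro h2
          have : Even r := by rcases Nat.even_mul.mp h2 with h | h <;> exact h
          obtain ⟨c, rfl⟩ := this
          exact h4 ⟨c * c, by ring⟩
        · rintro ⟨h, ho⟩
          refine ⟨h, ?_⟩
          rintro rfl
          simp at ho
      simp only [this]
      split_ifs <;> decide
  · intro n hn
    rw [coeff_expand]
    split_ifs with h
    · obtain ⟨m, rfl⟩ := h
      rw [Nat.mul_div_cancel_left _ (by norm_num), coeff_map, eq_intCast, csq]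
      split_ifs with h
      · obtain ⟨⟨r, rfl⟩, h0⟩ := h
        rw [sum_eq_single r]
        · rw [if_pos (by ring)]
        · intro b _ hb
          rw [if_neg]
          intro h2
          apply hb; nlinarith
        · intro h3
          exfalso; apply h3
          have : r ≤ r * r := Nat.le_mul_self r
          simp only [mem_filter, mem_range]
          refine ⟨by omega, ?_⟩
          rintro rfl
          simp at h0
      · symm
        apply sum_eq_zero
        intro s hs
        simp only [mem_filter, mem_range] at hs
        rw [if_neg]
        intro h2
        have : m = s * s := by nlinarith
        subst this
        exact h ⟨⟨s, rfl⟩, by simpa using hs.2⟩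
    · symm
      apply sum_eq_zero
      intro s hs
      rw [if_neg]
      rintro rfl
      exact h (dvd_mul_right _ _)

theorem mod16 {N : ℕ} (hN : N % 9 = 6) : (16 : ℤ) ∣ Rbar 4 9 N := by
  obtain ⟨I, hI⟩ := exists_inv
  have hI36 : expand 36 (by norm_num) th * expand 36 (by norm_num) I = 1 := by
    rw [← map_mul, hI, map_one]
  have hf : ∀ n, n % 9 = 6 → (16 : ℤ) ∣ coeff n (expand 4 (by norm_num) th * I) := by
    intro n hn
    have e4 : expand 4 (by norm_num) th = 1 + 2 * expand 4 (by norm_num) sq := by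
      rw [th, map_add, map_mul, map_one, map_ofNat]
    have e : expand 4 (by norm_num) th * I = 1 - (2 : ℤ) • sq + (4 : ℤ) • (sq * sq)
        + (2 : ℤ) • expand 4 (by norm_num) sq - (4 : ℤ) • (expand 4 (by norm_num) sq * sq)
        + (8 : ℤ) • ((expand 4 (by norm_num) sq - sq) * sq ^ 2)
        + (16 : ℤ) • (sq ^ 4 * I * expand 4 (by norm_num) th - expand 4 (by norm_num) sq * sq ^ 3) := by
      rw [e4]
      simp only [zsmul_eq_mul]
      push_cast
      rw [th] at hI
      linear_combination (1 + 2 * expand 4 (by norm_num) sq) *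
        (1 - 2 * sq + 4 * sq ^ 2 - 8 * sq ^ 3) * hI
    rw [e]
    simp only [map_add, map_sub, map_zsmul, smul_eq_mul]
    rw [Q9_one Q9_sq hn, Q9_one Q9_sq4 hn, Q9_two Q9_sq Q9_sq hn, Q9_two Q9_sq4 Q9_sq hn,
      coeff_one, if_neg (by omega)]
    obtain ⟨c, hc⟩ := even_coeff hn
    rw [hc]
    simp only [mul_zero, sub_zero, zero_add]
    exact dvd_add ⟨c, by ring⟩ (dvd_mul_right _ _)
  have hG : G = (expand 4 (by norm_num) th * I) *
      expand 9 (by norm_num) (th * expand 4 (by norm_num) I) := by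
    rw [map_mul, ← expand_mul 9 (by norm_num) 4 (by norm_num)]
    have := G_eq
    linear_combination (I * expand 36 (by norm_num) I) * this - G * hI - G * th * I * hI36
  have h : (Rbar 4 9 N : ℤ) = coeff N G := by rw [G, coeff_mk]
  rw [h, hG, coeff_mul]
  apply dvd_sum
  intro p hp
  rw [HasAntidiagonal.mem_antidiagonal] at hp
  by_cases h9 : 9 ∣ p.2
  · exact Dvd.dvd.mul_right (hf _ (by omega)) _
  · rw [coeff_expand_of_not_dvd _ _ _ h9]; simp

/-- supported on a residue class -/
def S (m : ℕ) (r : ZMod m) (F : (ZMod 3)⟦X⟧) : Prop := ∀ n, coeff n F ≠ 0 → (n : ZMod m) = r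

theorem S.mul {m : ℕ} {r s : ZMod m} {F K : (ZMod 3)⟦X⟧} (h : S m r F) (h' : S m s K) :
    S m (r + s) (F * K) := by
  intro n hn
  rw [coeff_mul] at hn
  obtain ⟨p, hp, h0⟩ := exists_ne_zero_of_sum_ne_zero hn
  rw [HasAntidiagonal.mem_antidiagonal] at hp
  rw [← hp, Nat.cast_add, h _ (left_ne_zero_of_mul h0), h' _ (right_ne_zero_of_mul h0)]

theorem S.expand {m : ℕ} {r : ZMod m} {F : (ZMod 3)⟦X⟧} (h : S m r F) (k : ℕ) (hk : k ≠ 0) :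
    S m (k * r) (PowerSeries.expand k hk F) := by
  intro n hn
  rw [coeff_expand] at hn
  split_ifs at hn with h1
  · obtain ⟨c, rfl⟩ := h1
    rw [Nat.mul_div_cancel_left _ (by omega)] at hn
    rw [Nat.cast_mul, h _ hn]
  · simp at hn

theorem S_expand_zero (m : ℕ) (F : (ZMod 3)⟦X⟧) (k : ℕ) (hk : k ≠ 0) (hm : m ∣ k) :
    S m 0 (expand k hk F) := by
  intro n hn
  rw [ZMod.natCast_eq_zero_iff]
  refine hm.trans ?_
  by_contra h
  exact hn (coeff_expand_of_not_dvd _ _ _ h)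

theorem S.zero {m : ℕ} {r : ZMod m} {F : (ZMod 3)⟦X⟧} (h : S m r F) {N : ℕ}
    (hN : (N : ZMod m) ≠ r) : coeff N F = 0 := by
  by_contra h0
  exact hN (h N h0)

/-- theta mod 3 -/
noncomputable def t : (ZMod 3)⟦X⟧ := map (Int.castRingHom (ZMod 3)) th

/-- the part of theta prime to 3 -/
noncomputable def U : (ZMod 3)⟦X⟧ :=
  PowerSeries.mk fun n => if IsSquare n ∧ ¬ 3 ∣ n then (-1) ^ n else 0

theorem coeff_t (n : ℕ) : coeff n t =
    if n = 0 then 1 else if IsSquare n then 2 * (-1) ^ n else 0 := by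
  have : (2 : ℤ⟦X⟧) * sq = C (2 : ℤ) * sq := by simp
  rw [t, coeff_map, th, map_add, this, coeff_C_mul, sq, coeff_mk, coeff_one]
  by_cases h0 : n = 0
  · simp [h0]
  · by_cases h1 : IsSquare n <;> simp [h0, h1]

theorem t_eq : t = expand 9 (by norm_num) t - U := by
  ext n
  rw [map_sub, coeff_expand, coeff_t, U, coeff_mk, coeff_t]
  have three : (2 : ZMod 3) = -1 := by decide
  by_cases h3 : 3 ∣ n
  · simp only [h3, not_true, and_false, if_false, sub_zero]
    by_cases h9 : 9 ∣ n
    · obtain ⟨m, rfl⟩ := h9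
      rw [if_pos (dvd_mul_right _ _), Nat.mul_div_cancel_left _ (by norm_num)]
      have e : IsSquare (9 * m) ↔ IsSquare m := by
        constructor
        · rintro ⟨r, hr⟩
          have : 3 ∣ r * r := ⟨3 * m, by rw [← hr]; ring⟩
          have : 3 ∣ r := by rcases Nat.prime_three.dvd_mul.mp this with h | h <;> exact h
          obtain ⟨c, rfl⟩ := this
          exact ⟨c, by nlinarith⟩
        · rintro ⟨r, rfl⟩
          exact ⟨3 * r, by ring⟩
      have e2 : (-1 : ZMod 3) ^ (9 * m) = (-1) ^ m := by
        rw [pow_mul]; congr 1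
      simp [e, e2]
    · rw [if_neg h9, if_neg (by rintro rfl; simp at h9), if_neg]
      rintro ⟨r, rfl⟩
      have : 3 ∣ r := by rcases Nat.prime_three.dvd_mul.mp h3 with h | h <;> exact h
      obtain ⟨c, rfl⟩ := this
      exact h9 ⟨c * c, by ring⟩
  · have h9 : ¬ 9 ∣ n := by omega
    rw [if_neg h9, if_neg (by rintro rfl; simp at h3)]
    simp only [h3, not_false_iff, and_true, three]
    split_ifs <;> ring

theorem S_U : S 3 1 U := by
  intro n hn
  rw [U, coeff_mk] at hn
  split_ifs at hn with h
  · obtain ⟨⟨r, rfl⟩, h⟩ := h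
    have hr : ¬ 3 ∣ r := fun h' ↦ h (Dvd.dvd.mul_right h' _)
    rw [← ZMod.natCast_eq_zero_iff] at hr
    push_cast
    generalize (r : ZMod 3) = a at *
    revert a; decide
  · simp at hn

theorem S_3U : S 9 3 (expand 3 (by norm_num) U) := by
  intro n hn
  rw [coeff_expand] at hn
  split_ifs at hn with h1
  · obtain ⟨c, rfl⟩ := h1
    rw [Nat.mul_div_cancel_left _ (by omega)] at hn
    have := S_U c hn
    have h1 : ((c : ℕ) : ZMod 3) = ((1 : ℕ) : ZMod 3) := by simpa using this
    rw [ZMod.natCast_eq_natCast_iff] at h1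
    have : (((3 * c : ℕ)) : ZMod 9) = ((3 : ℕ) : ZMod 9) := by
      rw [ZMod.natCast_eq_natCast_iff]
      unfold Nat.ModEq at *
      omega
    exact this
  · simp at hn

/-- Solutions of 3 x^2 + y^2 = N with y = 1 mod 3 -/
noncomputable def sol (N : ℕ) : Finset (ℤ × ℤ) :=
  ((Icc (-N : ℤ) N) ×ˢ ((Icc (-N : ℤ) N).filter (fun y ↦ y % 3 = 1))).filter
    (fun p ↦ 3 * p.1.natAbs ^ 2 + p.2.natAbs ^ 2 = N)

theorem mem_sol (N : ℕ) (p : ℤ × ℤ) : p ∈ sol N ↔ 3 * p.1 ^ 2 + p.2 ^ 2 = N ∧ p.2 % 3 = 1 := by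
  simp only [sol, mem_filter, mem_product, mem_Icc]
  have e : 3 * p.1.natAbs ^ 2 + p.2.natAbs ^ 2 = N ↔ 3 * p.1 ^ 2 + p.2 ^ 2 = (N : ℤ) := by
    zify
    simp [sq_abs]
  rw [e]
  constructor
  · tauto
  · rintro ⟨h1, h2⟩
    have a : |p.1| ≤ N := by
      rw [← h1]
      have := Int.le_self_sq |p.1|
      rw [sq_abs] at this
      nlinarith [sq_nonneg p.1, sq_nonneg p.2]
    have b : |p.2| ≤ N := by
      rw [← h1]
      have := Int.le_self_sq |p.2|
      rw [sq_abs] at this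
      nlinarith [sq_nonneg p.1, sq_nonneg p.2]
    rw [abs_le] at a b
    exact ⟨⟨a, b, h2⟩, h1⟩

/-- rotation of order three -/
def rot (p : ℤ × ℤ) : ℤ × ℤ := ((p.2 - p.1) / 2, (-p.2 - 3 * p.1) / 2)

theorem sol_par {N : ℕ} (hN : Even N) {p : ℤ × ℤ} (h : p ∈ sol N) : p.1 % 2 = p.2 % 2 := by
  rw [mem_sol] at h
  have h1 : Even (3 * p.1 ^ 2 + p.2 ^ 2) := by rw [h.1]; exact_mod_cast hN
  have h2 : Even (p.1 ^ 2 + p.2 ^ 2) := by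
    have : p.1 ^ 2 + p.2 ^ 2 = (3 * p.1 ^ 2 + p.2 ^ 2) - 2 * p.1 ^ 2 := by ring
    rw [this]
    exact h1.sub (even_two_mul _)
  rw [Int.even_add, Int.even_pow, Int.even_pow] at h2
  simp only [ne_eq, OfNat.ofNat_ne_zero, not_false_eq_true, and_true] at h2
  rw [Int.even_iff, Int.even_iff] at h2
  omega

theorem rot_mem {N : ℕ} (hN : Even N) {p : ℤ × ℤ} (h : p ∈ sol N) : rot p ∈ sol N := by
  have hp := sol_par hN h
  rw [mem_sol] at h ⊢
  obtain ⟨x, y⟩ := p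
  simp only [rot] at *
  obtain ⟨h1, h2⟩ := h
  obtain ⟨a, ha⟩ : ∃ a, (y - x) / 2 = a := ⟨_, rfl⟩
  obtain ⟨b, hb⟩ : ∃ b, (-y - 3 * x) / 2 = b := ⟨_, rfl⟩
  rw [ha, hb]
  have ha' : y = 2 * a + x := by omega
  have hb' : b = -a - 2 * x := by omega
  refine ⟨?_, by omega⟩
  rw [← h1, hb', ha']; ring

theorem rot3 {N : ℕ} (hN : Even N) {p : ℤ × ℤ} (h : p ∈ sol N) : rot (rot (rot p)) = p := by
  have h1 := sol_par hN h
  have h2 := sol_par hN (rot_mem hN h)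
  have h3 := sol_par hN (rot_mem hN (rot_mem hN h))
  obtain ⟨x, y⟩ := p
  simp only [rot] at *
  rw [Prod.ext_iff]
  simp only
  omega

theorem card_sol {N : ℕ} (hN : Even N) : ((sol N).card : ZMod 3) = 0 := by
  let f : Function.End (sol N) := fun p ↦ ⟨rot p.1, rot_mem hN p.2⟩
  have hf : f ^ 3 ^ 1 = 1 := by
    funext p
    apply Subtype.ext
    exact rot3 hN p.2
  have h := Equiv.Perm.card_fixedPoints_modEq hf
  have h0 : Fintype.card f.fixedPoints = 0 := by
    rw [Fintype.card_eq_zero_iff]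
    constructor
    rintro ⟨⟨p, hp⟩, h⟩
    have h1 : rot p = p := congrArg Subtype.val h
    have h2 := sol_par hN hp
    rw [mem_sol] at hp
    obtain ⟨x, y⟩ := p
    simp only [rot, Prod.mk.injEq] at h1 hp h2
    omega
  rw [h0, Fintype.card_coe] at h
  rw [ZMod.natCast_eq_zero_iff]
  exact (Nat.modEq_zero_iff_dvd).mp h

/-- the product series -/
noncomputable def H : (ZMod 3)⟦X⟧ := expand 3 (by norm_num) t * U

theorem negpow_sq (r : ℕ) : (-1 : ZMod 3) ^ (r * r) = (-1) ^ r := by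
  rcases Nat.even_or_odd r with h | h
  · rw [(h.mul_right r).neg_one_pow, h.neg_one_pow]
  · rw [(h.mul h).neg_one_pow, h.neg_one_pow]

theorem t_box (N n : ℕ) (h : n ≤ N) : coeff n t =
    ∑ x ∈ Icc (-N : ℤ) N, if x.natAbs ^ 2 = n then (-1 : ZMod 3) ^ x.natAbs else 0 := by
  rw [coeff_t, ← sum_filter]
  by_cases h0 : n = 0
  · subst h0
    have : (Icc (-N : ℤ) N).filter (fun x ↦ x.natAbs ^ 2 = 0) = {0} := by
      ext x
      simp
      omega
    rw [this]; simp
  · rw [if_neg h0]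
    split_ifs with h1
    · obtain ⟨r, rfl⟩ := h1
      have hr : r ≠ 0 := by rintro rfl; simp at h0
      have hle : r ≤ r * r := Nat.le_mul_self r
      have : (Icc (-N : ℤ) N).filter (fun x ↦ x.natAbs ^ 2 = r * r) = {(r : ℤ), -(r : ℤ)} := by
        ext x
        simp only [mem_filter, mem_Icc, mem_insert, mem_singleton]
        have : x.natAbs ^ 2 = r * r ↔ x.natAbs = r := by
          rw [← pow_two]
          exact Nat.pow_left_inj (by norm_num)
        rw [this]
        omega
      rw [this, sum_pair (by omega), negpow_sq]
      simp
      ring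
    · symm
      apply sum_eq_zero
      intro x hx
      simp only [mem_filter] at hx
      exact absurd ⟨x.natAbs, by rw [← hx.2]; ring⟩ h1

theorem U_box (N n : ℕ) (h : n ≤ N) : coeff n U =
    ∑ x ∈ (Icc (-N : ℤ) N).filter (fun y ↦ y % 3 = 1),
      if x.natAbs ^ 2 = n then (-1 : ZMod 3) ^ x.natAbs else 0 := by
  rw [U, coeff_mk, ← sum_filter]
  split_ifs with h1
  · obtain ⟨⟨r, rfl⟩, h3⟩ := h1
    have hr : ¬ 3 ∣ r := fun h' ↦ h3 (Dvd.dvd.mul_right h' _)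
    have hle : r ≤ r * r := Nat.le_mul_self r
    have : ((Icc (-N : ℤ) N).filter (fun y ↦ y % 3 = 1)).filter (fun x ↦ x.natAbs ^ 2 = r * r) =
        {if r % 3 = 1 then (r : ℤ) else -(r : ℤ)} := by
      ext x
      simp only [mem_filter, mem_Icc, mem_singleton]
      have : x.natAbs ^ 2 = r * r ↔ x.natAbs = r := by
        rw [← pow_two]
        exact Nat.pow_left_inj (by norm_num)
      rw [this]
      split_ifs <;> omega
    rw [this, sum_singleton, negpow_sq]
    split_ifs <;> simp
  · symm
    apply sum_eq_zero
    intro x hx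
    simp only [mem_filter] at hx
    exfalso
    apply h1
    refine ⟨⟨x.natAbs, by rw [← hx.2]; ring⟩, ?_⟩
    rw [← hx.2]
    intro h3
    have := Nat.prime_three.dvd_of_dvd_pow h3
    omega

theorem t3_box (N n : ℕ) (h : n ≤ N) : coeff n (expand 3 (by norm_num) t) =
    ∑ x ∈ Icc (-N : ℤ) N, if 3 * x.natAbs ^ 2 = n then (-1 : ZMod 3) ^ x.natAbs else 0 := by
  rw [coeff_expand]
  split_ifs with h1
  · obtain ⟨m, rfl⟩ := h1
    rw [Nat.mul_div_cancel_left _ (by norm_num), t_box N m (by omega)]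
    refine sum_congr rfl fun x _ ↦ ?_
    simp
  · symm
    apply sum_eq_zero
    intro x _
    rw [if_neg]
    rintro rfl
    exact h1 (dvd_mul_right _ _)

theorem S_H : S 2 1 H := by
  intro N hN
  by_contra h
  have hev : Even N := by
    rw [← Nat.not_odd_iff_even]
    intro ho
    exact h (by rw [ZMod.natCast_eq_one_iff_odd]; exact ho)
  apply hN
  rw [H, coeff_mul_box _ _ N _ _ _ _ _ _ (t3_box N) (U_box N), ← sum_product', ← sum_filter]
  have : ∀ p ∈ sol N, (-1 : ZMod 3) ^ p.1.natAbs * (-1) ^ p.2.natAbs = 1 := by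
    intro p hp
    have := sol_par hev hp
    rw [← pow_add]
    apply Even.neg_one_pow
    rw [Nat.even_iff]; omega
  have h2 := sum_congr rfl this
  refine h2.trans ?_
  simp [card_sol hev]

theorem mod3 {N : ℕ} (hN : N % 18 = 15) : (3 : ℤ) ∣ Rbar 4 9 N := by
  refine (ZMod.intCast_zmod_eq_zero_iff_dvd _ 3).mp ?_
  obtain ⟨I, hI⟩ := exists_inv
  set g := map (Int.castRingHom (ZMod 3)) G with hg
  set i := map (Int.castRingHom (ZMod 3)) I with hi
  have h : (((Rbar 4 9 N : ℕ) : ℤ) : ZMod 3) = coeff N g := by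
    rw [hg, coeff_map, G, coeff_mk]; rfl
  rw [h]
  have ti : t * i = 1 := by rw [t, hi, ← map_mul, hI, map_one]
  have tk : ∀ k (hk : k ≠ 0), expand k hk t * expand k hk i = 1 := by
    intro k hk; rw [← map_mul, ti, map_one]
  have t3 : t ^ 3 = expand 3 (by norm_num) t := frob 3 t
  have hgt : g * t * expand 36 (by norm_num) t =
      expand 4 (by norm_num) t * expand 9 (by norm_num) t := by
    have := congrArg (PowerSeries.map (Int.castRingHom (ZMod 3))) G_eq
    simp only [map_mul, map_expand] at this
    exact this
  have e4 : expand 4 (by norm_num) t = expand 36 (by norm_num) t - expand 4 (by norm_num) U := by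
    conv_lhs => rw [t_eq, map_sub, ← expand_mul 4 (by norm_num) 9 (by norm_num)]
  have e3 : expand 3 (by norm_num) t = expand 27 (by norm_num) t - expand 3 (by norm_num) U := by
    conv_lhs => rw [t_eq, map_sub, ← expand_mul 3 (by norm_num) 9 (by norm_num)]
  have h93 : (expand 9 (by norm_num) t) ^ 3 = expand 27 (by norm_num) t := by
    rw [← map_pow, t3, ← expand_mul 9 (by norm_num) 3 (by norm_num)]
  have h33 : (expand 3 (by norm_num) t) ^ 3 = expand 9 (by norm_num) t := by
    rw [← map_pow, t3, ← expand_mul 3 (by norm_num) 3 (by norm_num)]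
  have hH3 : expand 3 (by norm_num) H = expand 9 (by norm_num) t * expand 3 (by norm_num) U := by
    rw [H, map_mul, ← expand_mul 3 (by norm_num) 3 (by norm_num)]
  have h36 : expand 4 (by norm_num) (expand 9 (by norm_num) i) = expand 36 (by norm_num) i := by
    rw [← expand_mul 4 (by norm_num) 9 (by norm_num)]
  have e1 := t_eq
  have i3 := tk 3 (by norm_num)
  have i9 := tk 9 (by norm_num)
  have i36 := tk 36 (by norm_num)
  have SU := S_U
  have S4U : S 3 1 (expand 4 (by norm_num) U) := S_U.expand 4 (by norm_num)
  have S2V : S 2 0 (expand 4 (by norm_num) (U * expand 9 (by norm_num) i)) :=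
    S_expand_zero 2 _ 4 (by norm_num) (by norm_num)
  have S36 : S 3 0 (expand 36 (by norm_num) t) := S_expand_zero 3 _ _ _ (by norm_num)
  have S9 : S 3 0 (expand 9 (by norm_num) t) := S_expand_zero 3 _ _ _ (by norm_num)
  have S3i : S 3 0 (expand 3 (by norm_num) i) := S_expand_zero 3 _ _ _ (by norm_num)
  have S36i : S 3 0 (expand 36 (by norm_num) i) := S_expand_zero 3 _ _ _ (by norm_num)
  have S9' : S 9 0 (expand 9 (by norm_num) t) := S_expand_zero 9 _ _ _ (by norm_num)
  have S27' : S 9 0 (expand 27 (by norm_num) t) := S_expand_zero 9 _ _ _ (by norm_num)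
  have S3U' := S_3U
  have SH := S_H
  have SH3 : S 2 1 (expand 3 (by norm_num) H) := S_H.expand 3 (by norm_num)
  have hV : expand 4 (by norm_num) (U * expand 9 (by norm_num) i) =
    expand 4 (by norm_num) U * expand 36 (by norm_num) i := by rw [map_mul, h36]
  have hH : H = expand 3 (by norm_num) t * U := rfl
  generalize expand 4 (by norm_num) (U * expand 9 (by norm_num) i) = V4 at *
  generalize expand 3 (by norm_num) H = H3 at *
  generalize expand 36 (by norm_num) t = T36 at *
  generalize expand 27 (by norm_num) t = T27 at *
  generalize expand 9 (by norm_num) t = T9 at *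
  generalize expand 3 (by norm_num) t = T3 at *
  generalize expand 4 (by norm_num) t = T4 at *
  generalize expand 3 (by norm_num) U = U3 at *
  generalize expand 4 (by norm_num) U = U4 at *
  generalize expand 36 (by norm_num) i = J36 at *
  generalize expand 9 (by norm_num) i = J9 at *
  generalize expand 3 (by norm_num) i = J3 at *
  have c3 : (3 : (ZMod 3)⟦X⟧) = 0 := by
    have : (3 : (ZMod 3)⟦X⟧) = C (3 : ZMod 3) := (map_ofNat C 3).symm
    rw [this, show (3 : ZMod 3) = 0 by decide, map_zero]
  have hi' : i = t ^ 2 * J3 := by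
    linear_combination i * (-1 : (ZMod 3)⟦X⟧) * i3 + i * J3 * (-1 : (ZMod 3)⟦X⟧) * t3 + t ^ 2 * J3 * ti
  have hj3 : J3 = T3 ^ 2 * J9 := by
    linear_combination J3 * (-1 : (ZMod 3)⟦X⟧) * i9 + J3 * J9 * (-1 : (ZMod 3)⟦X⟧) * h33 + T3 ^ 2 * J9 * i3
  have g1 : g = T4 * t ^ 2 * (T9 * J3 * J36) := by
    have : g = T4 * T9 * i * J36 := by
      linear_combination i * J36 * hgt - g * ti - g * t * i * i36
    rw [this, hi']; ring
  have g2 : g = T36 * (T9 * U) * (T9 * J3 * J36) + T36 * (U * U) * (T9 * J3 * J36)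
      - U4 * (T9 * T9) * (T9 * J3 * J36) - U4 * (T9 * U) * (T9 * J3 * J36)
      + (T9 * T9) * (T27 * T27) + (T9 * T27) * (T9 * U3) + H3 * H3 - V4 * (H * H) := by
    have a1 : T36 * T9 ^ 2 * (T9 * J3 * J36) = T9 ^ 2 * T3 ^ 2 := by
      rw [hj3]
      linear_combination T9 ^ 3 * T3 ^ 2 * J9 * i36 + T9 ^ 2 * T3 ^ 2 * i9
    have a2 : U4 * (U * U) * (T9 * J3 * J36) = V4 * (H * H) := by
      rw [hj3, hV, hH]
      linear_combination U4 * U ^ 2 * J36 * T3 ^ 2 * i9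
    rw [e3] at a1
    rw [g1, e4, e1, ← a2, hH3]
    linear_combination a1 + (- (T36 - U4) * T9 * U * (T9 * J3 * J36) - T9 ^ 2 * T27 * U3) * c3
  have n3 : (N : ZMod 3) = 0 := by
    rw [ZMod.natCast_eq_zero_iff]; omega
  have n2 : (N : ZMod 2) = 1 := by
    rw [ZMod.natCast_eq_one_iff_odd, Nat.odd_iff]; omega
  have n9 : (N : ZMod 9) = 6 := by
    have : (N : ZMod 9) = ((6 : ℕ) : ZMod 9) := by
      rw [ZMod.natCast_eq_natCast_iff]
      unfold Nat.ModEq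
      omega
    exact this
  have SK : S 3 0 (T9 * J3 * J36) := (S9.mul S3i).mul S36i
  rw [g2]
  simp only [map_add, map_sub]
  rw [((S36.mul (S9.mul SU)).mul SK).zero (by rw [n3]; decide),
    ((S36.mul (SU.mul SU)).mul SK).zero (by rw [n3]; decide),
    ((S4U.mul (S9.mul S9)).mul SK).zero (by rw [n3]; decide),
    ((S4U.mul (S9.mul SU)).mul SK).zero (by rw [n3]; decide),
    ((S9'.mul S9').mul (S27'.mul S27')).zero (by rw [n9]; decide),
    ((S9'.mul S27').mul (S9'.mul S3U')).zero (by rw [n9]; decide),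
    (SH3.mul SH3).zero (by rw [n2]; decide),
    (S2V.mul (SH.mul SH)).zero (by rw [n2]; decide)]
  simp

end RB
end RB

theorem Rbar_four_nine_18n_15_mod_48 (n : ℕ) :
    Rbar 4 9 (18 * n + 15) ≡ 0 [MOD 48] := by
  have h1 := RB.mod16 (N := 18 * n + 15) (by omega)
  have h2 := RB.mod3 (N := 18 * n + 15) (by omega)
  rw [Nat.modEq_zero_iff_dvd]
  have h1' : 16 ∣ Rbar 4 9 (18 * n + 15) := by exact_mod_cast h1
  have h2' : 3 ∣ Rbar 4 9 (18 * n + 15) := by exact_mod_cast h2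
  omega
end

section
/- For all integers n ≥ 0, the number of (4,9)-regular overpartitions satisfies R̄_{4,9}(18n+12) ≡ 0 (mod 32). -/
open Finset PowerSeries Filter Topology
open scoped PowerSeries.WithPiTopology

namespace RbarAux

lemma shanks {R : Type*} [CommRing R] (x : R) (n : ℕ) :
    (∏ i ∈ range n, (1 + x ^ (i + 1))) * (1 + 2 * ∑ s ∈ range n, (-1) ^ (s + 1) * x ^ ((s + 1) ^ 2))
    = (∏ i ∈ range n, (1 - x ^ (i + 1))) +
      2 * ∑ s ∈ range n, (-1) ^ (s + 1) * x ^ ((s + 1) * (n + 1)) *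
        (∏ i ∈ range s, (1 + x ^ (i + 1))) * ∏ i ∈ Ico (s + 1) n, (1 - x ^ (i + 1)) := by
  induction n with
  | zero => simp
  | succ n ih =>
    have key : ∀ m ≤ n, ∑ s ∈ range m, ((-1) ^ (s + 1) * x ^ ((s + 1) * (n + 1 + 1)) *
        (∏ i ∈ range s, (1 + x ^ (i + 1))) * (∏ i ∈ Ico (s + 1) (n + 1), (1 - x ^ (i + 1)))
        - (1 + x ^ (n + 1)) * ((-1) ^ (s + 1) * x ^ ((s + 1) * (n + 1)) *
        (∏ i ∈ range s, (1 + x ^ (i + 1))) * ∏ i ∈ Ico (s + 1) n, (1 - x ^ (i + 1)))) =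
        (-1) ^ (m + 1) * x ^ ((m + 1) * (n + 1)) * (∏ i ∈ range m, (1 + x ^ (i + 1))) *
          (∏ i ∈ Ico m n, (1 - x ^ (i + 1))) + x ^ (n + 1) * ∏ i ∈ Ico 0 n, (1 - x ^ (i + 1)) := by
      intro m hm
      induction m with
      | zero => simp
      | succ m ihm =>
        rw [sum_range_succ, ihm (by omega), prod_Ico_succ_top (by omega : m + 1 ≤ n),
          prod_range_succ, prod_eq_prod_Ico_succ_bot (by omega : m < n)]
        ring
    have k := key n le_rfl
    rw [sum_sub_distrib, ← mul_sum] at k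
    rw [Ico_self, prod_empty, mul_one, ← range_eq_Ico] at k
    rw [prod_range_succ, sum_range_succ, prod_range_succ, sum_range_succ, Ico_self, prod_empty]
    linear_combination (1 + x ^ (n + 1)) * ih - 2 * k

/-- `∑ c k X^(k^2)`. -/
noncomputable def th (c : ℕ → ℤ) : ℤ⟦X⟧ :=
  PowerSeries.mk fun n => if n.sqrt ^ 2 = n then c n.sqrt else 0

lemma coeff_th_sq (c : ℕ → ℤ) (k : ℕ) : coeff (k ^ 2) (th c) = c k := by
  simp [th, Nat.sqrt_eq']

lemma coeff_th_ne (c : ℕ → ℤ) (n : ℕ) (h : ∀ k, k ^ 2 = n → c k = 0) : coeff n (th c) = 0 := by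
  simp only [th, coeff_mk]
  split_ifs with h1
  · exact h _ h1
  · rfl

def c1 (k : ℕ) : ℤ := if k = 0 then 1 else 2 * (-1) ^ k

noncomputable def phi (e : ℕ) : ℤ⟦X⟧ := th fun k => if e ∣ k then c1 (k / e) else 0

lemma phi_tendsto (e : ℕ) (he : 0 < e) :
    Tendsto (fun n : ℕ => 1 + 2 * ∑ s ∈ range n, (-1) ^ (s + 1) * ((X : ℤ⟦X⟧) ^ (e ^ 2)) ^ ((s + 1) ^ 2))
      atTop (𝓝 (phi e)) := by
  have h0 : ∀ n : ℕ, 1 + 2 * ∑ s ∈ range n, (-1) ^ (s + 1) * ((X : ℤ⟦X⟧) ^ (e ^ 2)) ^ ((s + 1) ^ 2)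
      = ∑ k ∈ range (n + 1), C (c1 k) * X ^ ((e * k) ^ 2) := by
    intro n
    rw [sum_range_succ', mul_sum, add_comm]
    congr 1
    · apply sum_congr rfl
      intro s _
      simp [c1]
      ring
    · simp [c1]
  simp_rw [h0]
  rw [WithPiTopology.tendsto_iff_coeff_tendsto]
  intro d
  refine tendsto_atTop_of_eventually_const (i₀ := d) fun n hn => ?_
  simp only [map_sum, coeff_C_mul, coeff_X_pow]
  by_cases hd : ∃ k, (e * k) ^ 2 = d
  · obtain ⟨k, rfl⟩ := hd
    rw [phi, coeff_th_sq, sum_eq_single k]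
    · simp [Nat.mul_div_cancel_left _ he]
    · intro j _ hj
      rw [if_neg]
      · simp
      intro h
      rw [Nat.pow_left_inj (by norm_num)] at h
      exact hj (Nat.eq_of_mul_eq_mul_left he h).symm
    · intro h
      exfalso
      apply h
      rw [mem_range]
      have : k ≤ (e * k) ^ 2 := by nlinarith [Nat.le_mul_of_pos_left k he, Nat.zero_le (e*k), Nat.le_self_pow (two_ne_zero) (e*k)]
      omega
  · push Not at hd
    rw [phi, coeff_th_ne, sum_eq_zero]
    · intro k _
      rw [if_neg (fun h => hd k h.symm)]; simp
    · intro k hk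
      split_ifs with h
      · obtain ⟨j, rfl⟩ := h
        exact absurd hk (hd j)
      · rfl

lemma mult (p : ℕ → Prop) [DecidablePred p] (ε : ℤ⟦X⟧) :
    Multipliable (fun i => if p (i + 1) then 1 + ε * X ^ (i + 1) else (1 : ℤ⟦X⟧)) := by
  have : (fun i => if p (i + 1) then 1 + ε * X ^ (i + 1) else (1 : ℤ⟦X⟧)) =
      fun i => 1 + (if p (i + 1) then ε * X ^ (i + 1) else (0 : ℤ⟦X⟧)) := by
    ext1 i; split_ifs <;> simp
  rw [this]
  apply WithPiTopology.multipliable_one_add_of_tendsto_order_atTop_nhds_top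
  refine ENat.tendsto_nhds_top_iff_natCast_lt.mpr (fun n ↦ Filter.eventually_atTop.mpr ⟨n, ?_⟩)
  intro m hm
  split_ifs
  · refine lt_of_lt_of_le ?_ (le_order_mul ..)
    rw [order_X_pow]
    refine lt_of_lt_of_le ?_ le_add_self
    exact_mod_cast Nat.lt_succ_of_le hm
  · simp

noncomputable def PP (ε : ℤ⟦X⟧) (p : ℕ → Prop) [DecidablePred p] : ℤ⟦X⟧ :=
  ∏' i : ℕ, if p (i + 1) then 1 + ε * X ^ (i + 1) else 1

lemma PP_has (ε : ℤ⟦X⟧) (p : ℕ → Prop) [DecidablePred p] :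
    HasProd (fun i => if p (i + 1) then 1 + ε * X ^ (i + 1) else (1 : ℤ⟦X⟧)) (PP ε p) :=
  (mult p ε).hasProd

lemma PP_tendsto (ε : ℤ⟦X⟧) (d : ℕ) (hd : 0 < d) :
    Tendsto (fun n : ℕ => ∏ i ∈ range n, (1 + ε * ((X : ℤ⟦X⟧) ^ d) ^ (i + 1))) atTop
      (𝓝 (PP ε (d ∣ ·))) := by
  have h := PP_has ε (d ∣ ·)
  have inj : Function.Injective (fun j : ℕ => d * (j + 1) - 1) := by
    intro a b hab
    simp only at hab
    have h1 : 0 < d * (a + 1) := by positivity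
    have h2 : 0 < d * (b + 1) := by positivity
    have : d * (a + 1) = d * (b + 1) := by omega
    have := Nat.eq_of_mul_eq_mul_left hd this
    omega
  rw [← inj.hasProd_iff] at h
  · have := h.tendsto_prod_nat
    refine this.congr fun n => prod_congr rfl fun i _ => ?_
    have h1 : d * (i + 1) - 1 + 1 = d * (i + 1) := Nat.sub_add_cancel (Nat.mul_pos hd (Nat.succ_pos _))
    simp only [Function.comp, h1]
    rw [if_pos (dvd_mul_right _ _), pow_mul]
  · intro x hx
    rw [if_neg]
    rintro ⟨j, hj⟩
    apply hx
    rcases j with _ | j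
    · omega
    · exact ⟨j, by simp only; omega⟩

lemma PP_const (ε : ℤ⟦X⟧) (p : ℕ → Prop) [DecidablePred p] : constantCoeff (PP ε p) = 1 := by
  rw [PP, (mult p ε).map_tprod _ (WithPiTopology.continuous_constantCoeff ℤ)]
  rw [← tprod_one (α := ℤ) (β := ℕ)]
  refine tprod_congr fun i => ?_
  split_ifs <;> simp

lemma gauss (e : ℕ) (he : 0 < e) : PP 1 (e ^ 2 ∣ ·) * phi e = PP (-1) (e ^ 2 ∣ ·) := by
  have h1 := (PP_tendsto 1 (e ^ 2) (by positivity)).mul (phi_tendsto e he)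
  have h2 := PP_tendsto (-1) (e ^ 2) (by positivity)
  refine tendsto_nhds_unique h1 ?_
  simp only [one_mul, shanks]
  rw [← add_zero (PP (-1) (e ^ 2 ∣ ·))]
  refine Tendsto.add ?_ ?_
  · refine h2.congr fun n => prod_congr rfl fun i _ => by ring
  · rw [WithPiTopology.tendsto_iff_coeff_tendsto]
    intro d
    refine tendsto_atTop_of_eventually_const (i₀ := d) fun n hn => ?_
    have hdv : (X : ℤ⟦X⟧) ^ (d + 1) ∣ 2 * ∑ s ∈ range n, (-1) ^ (s + 1) * (X ^ e ^ 2) ^ ((s + 1) * (n + 1)) *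
        (∏ i ∈ range s, (1 + (X ^ e ^ 2) ^ (i + 1))) * ∏ i ∈ Ico (s + 1) n, (1 - (X ^ e ^ 2) ^ (i + 1)) := by
      refine Dvd.dvd.mul_left (dvd_sum fun s _ => ?_) _
      refine Dvd.dvd.mul_right (Dvd.dvd.mul_right (Dvd.dvd.mul_left ?_ _) _) _
      rw [← pow_mul]
      apply pow_dvd_pow
      have : 1 ≤ e ^ 2 := Nat.one_le_pow _ _ he
      calc d + 1 ≤ 1 * (1 * (n + 1)) := by omega
        _ ≤ _ := by gcongr; omega
    rw [X_pow_dvd_iff.1 hdv d (by omega), map_zero]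

abbrev pn (i : ℕ) : Prop := ¬ 4 ∣ i ∧ ¬ 9 ∣ i

lemma PP_rel (ε : ℤ⟦X⟧) :
    PP ε pn * PP ε (2 ^ 2 ∣ ·) * PP ε (3 ^ 2 ∣ ·) = PP ε (1 ^ 2 ∣ ·) * PP ε (6 ^ 2 ∣ ·) := by
  refine HasProd.unique (((PP_has ε pn).mul (PP_has ε (2 ^ 2 ∣ ·))).mul (PP_has ε (3 ^ 2 ∣ ·))) ?_
  convert! (PP_has ε (1 ^ 2 ∣ ·)).mul (PP_has ε (6 ^ 2 ∣ ·)) using 1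
  ext1 i
  have h36 : 6 ^ 2 ∣ i + 1 ↔ 4 ∣ i + 1 ∧ 9 ∣ i + 1 := by omega
  by_cases h4 : 4 ∣ i + 1 <;> by_cases h9 : 9 ∣ i + 1 <;> 
    simp only [h36, h4, h9, pn, one_pow, one_dvd, if_true, if_false, and_true, and_false, true_and, false_and, not_true_eq_false, not_false_eq_true, one_mul, mul_one, (by norm_num : 2 ^ 2 = 4), (by norm_num : 3 ^ 2 = 9)]

noncomputable def AA : ℤ⟦X⟧ := PowerSeries.mk fun n => (regularCount 4 9 n : ℤ)
noncomputable def BB : ℤ⟦X⟧ := PowerSeries.mk fun n => (regularDistinctCount 4 9 n : ℤ)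
noncomputable def FF : ℤ⟦X⟧ := PowerSeries.mk fun n => (Rbar 4 9 n : ℤ)

lemma FF_eq : FF = AA * BB := by
  ext n
  simp [FF, AA, BB, coeff_mul, Rbar]

lemma AA_eq : AA * PP (-1) pn = 1 := by
  have h := Nat.Partition.hasProd_powerSeriesMk_card_restricted ℤ pn
  have e : AA = PowerSeries.mk fun n ↦ (#(Nat.Partition.restricted n pn) : ℤ) := by
    ext n
    simp only [AA, coeff_mk, regularCount, Nat.Partition.restricted]
    rw [Fintype.card_subtype]
  rw [e]
  refine HasProd.unique (h.mul (PP_has (-1) pn)) ?_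
  convert! hasProd_one using 1
  ext1 i
  split_ifs
  · simp_rw [pow_mul]
    have := WithPiTopology.tsum_pow_mul_one_sub_of_constantCoeff_eq_zero
      (f := (X : ℤ⟦X⟧) ^ (i + 1)) (by simp)
    rw [neg_one_mul, ← sub_eq_add_neg]; exact this
  · simp

lemma BB_eq : BB = PP 1 pn := by
  have h := Nat.Partition.hasProd_genFun (fun i c ↦ if pn i ∧ c < 2 then (1 : ℤ) else 0)
  have e : BB = Nat.Partition.genFun (fun i c ↦ if pn i ∧ c < 2 then (1 : ℤ) else 0) := by
    ext n
    simp only [BB, coeff_mk, regularDistinctCount, Nat.Partition.coeff_genFun, Finsupp.prod,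
      prod_boole]
    rw [Fintype.card_subtype, card_filter]
    push_cast
    refine sum_congr rfl fun p _ => ?_
    congr 1
    simp only [Multiset.toFinsupp_support, Multiset.mem_toFinset, Multiset.toFinsupp_apply,
      Multiset.nodup_iff_count_le_one, eq_iff_iff]
    constructor
    · rintro ⟨h1, h2⟩ i hi
      exact ⟨h2 i hi, by have := h1 i; omega⟩
    · intro h
      refine ⟨fun i => ?_, fun i hi => (h i hi).1⟩
      by_cases hi : i ∈ p.parts
      · have := (h i hi).2; omega
      · rw [Multiset.count_eq_zero_of_notMem hi]; omega
  rw [e]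
  refine h.unique ?_
  convert! PP_has 1 pn using 1
  ext1 i
  rw [tsum_eq_single 0]
  · by_cases h : pn (i + 1)
    · rw [if_pos ⟨h, by norm_num⟩, if_pos h, smul_eq_C_mul]; simp
    · rw [if_neg (fun x => h x.1), if_neg h, smul_eq_C_mul]; simp
  · intro j hj
    rw [if_neg (by omega), smul_eq_C_mul, map_zero, zero_mul]

lemma main_eq : FF * phi 1 * phi 6 = phi 2 * phi 3 := by
  have hA := AA_eq
  have hB := BB_eq
  have hF := FF_eq
  have r1 := PP_rel 1
  have r2 := PP_rel (-1)
  have g1 := gauss 1 (by norm_num)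
  have g2 := gauss 2 (by norm_num)
  have g3 := gauss 3 (by norm_num)
  have g6 := gauss 6 (by norm_num)
  have hne : ∀ p : ℕ → Prop, ∀ _ : DecidablePred p, PP 1 p ≠ 0 := by
    intro p _ h
    have := PP_const 1 p
    rw [h] at this
    simp at this
  have n1 := hne (1 ^ 2 ∣ ·) inferInstance
  have n6 := hne (6 ^ 2 ∣ ·) inferInstance
  generalize PP 1 (1 ^ 2 ∣ ·) = P1 at *
  generalize PP 1 (2 ^ 2 ∣ ·) = P2 at *
  generalize PP 1 (3 ^ 2 ∣ ·) = P3 at *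
  generalize PP 1 (6 ^ 2 ∣ ·) = P6 at *
  generalize PP (-1) (1 ^ 2 ∣ ·) = M1 at *
  generalize PP (-1) (2 ^ 2 ∣ ·) = M2 at *
  generalize PP (-1) (3 ^ 2 ∣ ·) = M3 at *
  generalize PP (-1) (6 ^ 2 ∣ ·) = M6 at *
  generalize PP 1 pn = Pn at *
  generalize PP (-1) pn = Mn at *
  rw [hF]
  subst g1 g2 g3 g6 hB
  apply mul_left_cancel₀ (mul_ne_zero n1 n6)
  linear_combination (-AA * BB) * r2 + BB * P2 * phi 2 * P3 * phi 3 * hA + phi 2 * phi 3 * r1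

lemma coeff_th_mul (c d : ℕ → ℤ) (n : ℕ) : coeff n (th c * th d) =
    ∑ p ∈ (range (n + 1) ×ˢ range (n + 1)).filter (fun p => p.1 ^ 2 + p.2 ^ 2 = n),
      c p.1 * d p.2 := by
  rw [coeff_mul]
  symm
  refine sum_of_injOn (fun p => (p.1 ^ 2, p.2 ^ 2)) ?_ ?_ ?_ ?_
  · rintro ⟨a, b⟩ _ ⟨a', b'⟩ _ h
    simp only [Prod.mk.injEq] at h
    rw [Nat.pow_left_inj (by norm_num), Nat.pow_left_inj (by norm_num)] at h
    simp [h]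
  · rintro ⟨a, b⟩ h
    simp at h ⊢
    exact h.2
  · rintro ⟨a, b⟩ h1 h2
    rw [HasAntidiagonal.mem_antidiagonal] at h1
    by_cases ha : ∃ x, x ^ 2 = a
    · by_cases hb : ∃ y, y ^ 2 = b
      · obtain ⟨x, rfl⟩ := ha
        obtain ⟨y, rfl⟩ := hb
        exfalso
        apply h2
        refine ⟨(x, y), ?_, rfl⟩
        have hx := Nat.le_self_pow (two_ne_zero) x
        have hy := Nat.le_self_pow (two_ne_zero) y
        simp at h1 ⊢
        omega
      · rw [coeff_th_ne d b (fun k hk => absurd ⟨k, hk⟩ hb), mul_zero]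
    · rw [coeff_th_ne c a (fun k hk => absurd ⟨k, hk⟩ ha), zero_mul]
  · rintro ⟨a, b⟩ _
    simp [coeff_th_sq]

noncomputable def ind (p : ℕ → Prop) [DecidablePred p] : ℤ⟦X⟧ := th fun k => if p k then 1 else 0

lemma coeff_ind_mul (p q : ℕ → Prop) [DecidablePred p] [DecidablePred q] (n : ℕ) :
    coeff n (ind p * ind q) =
    #((range (n + 1) ×ˢ range (n + 1)).filter
      (fun x => x.1 ^ 2 + x.2 ^ 2 = n ∧ p x.1 ∧ q x.2)) := by
  rw [ind, ind, coeff_th_mul, card_filter, sum_filter]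
  push_cast
  refine sum_congr rfl fun x _ => ?_
  by_cases h1 : x.1 ^ 2 + x.2 ^ 2 = n <;> by_cases h2 : p x.1 <;> by_cases h3 : q x.2 <;>
    simp [h1, h2, h3]

noncomputable abbrev O : ℤ⟦X⟧ := ind fun k => k % 2 = 1 ∧ k % 3 ≠ 0
noncomputable abbrev E : ℤ⟦X⟧ := ind fun k => k % 2 = 0 ∧ k % 3 ≠ 0
noncomputable abbrev E4 : ℤ⟦X⟧ := ind fun k => k % 4 = 0 ∧ k % 3 ≠ 0
noncomputable abbrev E9 : ℤ⟦X⟧ := ind fun k => k % 6 = 0 ∧ k ≠ 0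
noncomputable abbrev O9 : ℤ⟦X⟧ := ind fun k => k % 6 = 3
noncomputable abbrev N6 : ℤ⟦X⟧ := ind fun k => k % 12 = 6

def fwd (x : ℕ × ℕ) : ℕ × ℕ :=
  if ((x.1 + x.2) / 2) % 2 = 1 then ((x.1 + x.2) / 2, ((x.1 - x.2) + (x.2 - x.1)) / 2)
  else (((x.1 - x.2) + (x.2 - x.1)) / 2, (x.1 + x.2) / 2)

def bwd (x : ℕ × ℕ) : ℕ × ℕ :=
  if (x.1 + x.2) % 3 = 0 then ((x.1 - x.2) + (x.2 - x.1), x.1 + x.2)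
  else (x.1 + x.2, (x.1 - x.2) + (x.2 - x.1))

lemma bwd_maps (u v m : ℕ) (h : u ^ 2 + v ^ 2 = m) (h1 : u % 2 = 1) (h2 : u % 3 ≠ 0)
    (h3 : v % 2 = 0) (h4 : v % 3 ≠ 0) : ((bwd (u, v)).1 ^ 2 + (bwd (u, v)).2 ^ 2 = 2 * m) ∧
        (((bwd (u, v)).1 % 2 = 1 ∧ (bwd (u, v)).1 % 3 ≠ 0) ∧ (bwd (u, v)).2 % 6 = 3) := by
  have hu : u % 3 = 1 ∨ u % 3 = 2 := by omega
  have hv : v % 3 = 1 ∨ v % 3 = 2 := by omega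
  have hs : ((u - v) + (v - u)) ^ 2 + (u + v) ^ 2 = 2 * m := by
    rcases le_total u v with hk | hk
    · obtain ⟨d, rfl⟩ : ∃ d, v = u + d := ⟨v - u, by omega⟩
      have e2 : (u - (u + d)) + (u + d - u) = d := by omega
      rw [e2, ← h]; ring
    · obtain ⟨d, rfl⟩ : ∃ d, u = v + d := ⟨u - v, by omega⟩
      have e2 : (v + d - v) + (v - (v + d)) = d := by omega
      rw [e2, ← h]; ring
  clear h h2 h4
  unfold bwd
  split_ifs with hp
  · refine ⟨hs, ?_⟩
    clear hs
    dsimp only at *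
    rcases le_total u v with hk | hk <;> rcases hu with hu | hu <;> rcases hv with hv | hv <;> omega
  · refine ⟨by rw [add_comm]; exact hs, ?_⟩
    clear hs
    dsimp only at *
    rcases le_total u v with hk | hk <;> rcases hu with hu | hu <;> rcases hv with hv | hv <;> omega

lemma bwd_fwd (z k : ℕ) (h1 : z % 2 = 1) (h2 : z % 3 ≠ 0) (h3 : k % 6 = 3) :
    bwd (fwd (z, k)) = (z, k) := by
  rcases le_total k z with hk | hk
  · obtain ⟨d, rfl⟩ : ∃ d, z = k + 2 * d := ⟨(z - k) / 2, by omega⟩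
    have e1 : (k + 2 * d + k) / 2 = k + d := by omega
    have e2 : ((k + 2 * d - k) + (k - (k + 2 * d))) / 2 = d := by omega
    simp only [fwd, e1, e2]
    split_ifs with hp
    · have e3 : ¬ ((k + d + d) % 3 = 0) := by omega
      have e4 : k + d - d + (d - (k + d)) = k := by omega
      simp only [bwd, if_neg e3, e4]; refine Prod.ext ?_ ?_ <;> dsimp only <;> omega
    · have e3 : ¬ ((d + (k + d)) % 3 = 0) := by omega
      have e4 : d - (k + d) + (k + d - d) = k := by omega
      simp only [bwd, if_neg e3, e4]; refine Prod.ext ?_ ?_ <;> dsimp only <;> omega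
  · obtain ⟨d, rfl⟩ : ∃ d, k = z + 2 * d := ⟨(k - z) / 2, by omega⟩
    have e1 : (z + (z + 2 * d)) / 2 = z + d := by omega
    have e2 : ((z - (z + 2 * d)) + (z + 2 * d - z)) / 2 = d := by omega
    simp only [fwd, e1, e2]
    split_ifs with hp
    · have e3 : ((z + d + d) % 3 = 0) := by omega
      have e4 : z + d - d + (d - (z + d)) = z := by omega
      simp only [bwd, if_pos e3, e4]; refine Prod.ext ?_ ?_ <;> dsimp only <;> omega
    · have e3 : ((d + (z + d)) % 3 = 0) := by omega
      have e4 : d - (z + d) + (z + d - d) = z := by omega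
      simp only [bwd, if_pos e3, e4]; refine Prod.ext ?_ ?_ <;> dsimp only <;> omega

lemma fwd_bwd (u v : ℕ) (h1 : u % 2 = 1) (h2 : u % 3 ≠ 0) (h3 : v % 2 = 0) (h4 : v % 3 ≠ 0) :
    fwd (bwd (u, v)) = (u, v) := by
  clear h2 h4
  rcases le_total u v with hk | hk
  · obtain ⟨d, rfl⟩ : ∃ d, v = u + d := ⟨v - u, by omega⟩
    have e0 : (u - (u + d)) + (u + d - u) = d := by omega
    simp only [bwd, e0]
    have e1 : (d + (u + (u + d))) / 2 = u + d := by omega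
    have e2 : (u + (u + d) + d) / 2 = u + d := by omega
    have e3 : ((d - (u + (u + d))) + (u + (u + d) - d)) / 2 = u := by omega
    have e4 : ((u + (u + d) - d) + (d - (u + (u + d)))) / 2 = u := by omega
    have e5 : ¬ ((u + d) % 2 = 1) := by omega
    split_ifs with hp
    · simp only [fwd, e1, e3, if_neg e5]
    · simp only [fwd, e2, e4, if_neg e5]
  · obtain ⟨d, rfl⟩ : ∃ d, u = v + d := ⟨u - v, by omega⟩
    have e0 : (v + d - v) + (v - (v + d)) = d := by omega
    simp only [bwd, e0]
    have e1 : (d + (v + d + v)) / 2 = v + d := by omega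
    have e2 : (v + d + v + d) / 2 = v + d := by omega
    have e3 : ((d - (v + d + v)) + (v + d + v - d)) / 2 = v := by omega
    have e4 : ((v + d + v - d) + (d - (v + d + v))) / 2 = v := by omega
    split_ifs with hp
    · simp only [fwd, e1, e3, if_pos h1]
    · simp only [fwd, e2, e4, if_pos h1]

lemma bij_card (m : ℕ) :
    #((range (2 * m + 1) ×ˢ range (2 * m + 1)).filter
      (fun x => x.1 ^ 2 + x.2 ^ 2 = 2 * m ∧ (x.1 % 2 = 1 ∧ x.1 % 3 ≠ 0) ∧ x.2 % 6 = 3)) =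
    #((range (m + 1) ×ˢ range (m + 1)).filter
      (fun x => x.1 ^ 2 + x.2 ^ 2 = m ∧ (x.1 % 2 = 1 ∧ x.1 % 3 ≠ 0) ∧
        (x.2 % 2 = 0 ∧ x.2 % 3 ≠ 0))) := by
  refine card_nbij' fwd bwd ?_ ?_ ?_ ?_
  · rintro ⟨z, k⟩ h
    simp only [coe_filter, mem_product, mem_range, Set.mem_ofPred_eq] at h ⊢
    obtain ⟨-, h, ⟨h1, h2⟩, h3⟩ := h
    suffices H : ((fwd (z, k)).1 ^ 2 + (fwd (z, k)).2 ^ 2 = m) ∧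
        (((fwd (z, k)).1 % 2 = 1 ∧ (fwd (z, k)).1 % 3 ≠ 0) ∧
        ((fwd (z, k)).2 % 2 = 0 ∧ (fwd (z, k)).2 % 3 ≠ 0)) by
      refine ⟨?_, H⟩
      have hx := Nat.le_self_pow (two_ne_zero) (fwd (z, k)).1
      have hy := Nat.le_self_pow (two_ne_zero) (fwd (z, k)).2
      have := H.1
      omega
    rcases le_total k z with hk | hk
    · obtain ⟨d, rfl⟩ : ∃ d, z = k + 2 * d := ⟨(z - k) / 2, by omega⟩
      have e1 : (k + 2 * d + k) / 2 = k + d := by omega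
      have e2 : ((k + 2 * d - k) + (k - (k + 2 * d))) / 2 = d := by omega
      simp only [fwd, e1, e2]
      split_ifs with hp
      · refine ⟨by dsimp only; nlinarith, ⟨?_, ?_⟩, ?_, ?_⟩ <;> dsimp only <;> omega
      · refine ⟨by dsimp only; nlinarith, ⟨?_, ?_⟩, ?_, ?_⟩ <;> dsimp only <;> omega
    · obtain ⟨d, rfl⟩ : ∃ d, k = z + 2 * d := ⟨(k - z) / 2, by omega⟩
      have e1 : (z + (z + 2 * d)) / 2 = z + d := by omega
      have e2 : ((z - (z + 2 * d)) + (z + 2 * d - z)) / 2 = d := by omega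
      simp only [fwd, e1, e2]
      split_ifs with hp
      · refine ⟨by dsimp only; nlinarith, ⟨?_, ?_⟩, ?_, ?_⟩ <;> dsimp only <;> omega
      · refine ⟨by dsimp only; nlinarith, ⟨?_, ?_⟩, ?_, ?_⟩ <;> dsimp only <;> omega
  · rintro ⟨u, v⟩ h
    simp only [coe_filter, mem_product, mem_range, Set.mem_ofPred_eq] at h ⊢
    obtain ⟨-, h, ⟨h1, h2⟩, h3, h4⟩ := h
    suffices H : ((bwd (u, v)).1 ^ 2 + (bwd (u, v)).2 ^ 2 = 2 * m) ∧
        (((bwd (u, v)).1 % 2 = 1 ∧ (bwd (u, v)).1 % 3 ≠ 0) ∧ (bwd (u, v)).2 % 6 = 3) by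
      refine ⟨?_, H⟩
      have hx := Nat.le_self_pow (two_ne_zero) (bwd (u, v)).1
      have hy := Nat.le_self_pow (two_ne_zero) (bwd (u, v)).2
      have := H.1
      omega
    exact bwd_maps u v m h h1 h2 h3 h4
  · rintro ⟨z, k⟩ h
    simp only [coe_filter, mem_product, mem_range, Set.mem_ofPred_eq] at h ⊢
    obtain ⟨-, h, ⟨h1, h2⟩, h3⟩ := h
    exact bwd_fwd z k h1 h2 h3
  · rintro ⟨u, v⟩ h
    simp only [coe_filter, mem_product, mem_range, Set.mem_ofPred_eq] at h ⊢
    obtain ⟨-, h, ⟨h1, h2⟩, h3, h4⟩ := h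
    exact fwd_bwd u v h1 h2 h3 h4

lemma OO9 : O * O9 = expand 2 two_ne_zero (O * E) := by
  ext n
  rw [coeff_expand]
  split_ifs with h
  · obtain ⟨m, rfl⟩ := h
    rw [Nat.mul_div_cancel_left _ two_pos, coeff_ind_mul, coeff_ind_mul, bij_card]
  · rw [coeff_ind_mul, Nat.cast_eq_zero, card_eq_zero, filter_eq_empty_iff]
    rintro ⟨x, y⟩ - ⟨h1, h2, h3⟩
    apply h
    simp only at h1 h2 h3
    rw [← h1, ← even_iff_two_dvd, Nat.even_add, Nat.even_pow, Nat.even_pow, Nat.even_iff,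
      Nat.even_iff]
    omega

lemma expand_four_th (c : ℕ → ℤ) : expand 4 four_ne_zero (th c) =
    th (fun k => if 2 ∣ k then c (k / 2) else 0) := by
  ext n
  rw [coeff_expand]
  split_ifs with h
  · obtain ⟨m, rfl⟩ := h
    rw [Nat.mul_div_cancel_left _ (by norm_num)]
    by_cases hm : ∃ j, j ^ 2 = m
    · obtain ⟨j, rfl⟩ := hm
      rw [coeff_th_sq, show 4 * j ^ 2 = (2 * j) ^ 2 by ring, coeff_th_sq]
      simp
    · rw [coeff_th_ne, coeff_th_ne]
      · intro k hk
        split_ifs with h2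
        · obtain ⟨j, rfl⟩ := h2
          exact absurd ⟨j, by nlinarith⟩ hm
        · rfl
      · exact fun k hk => absurd ⟨k, hk⟩ hm
  · symm
    apply coeff_th_ne
    intro k hk
    rw [if_neg]
    rintro ⟨j, rfl⟩
    exact h ⟨j ^ 2, by rw [← hk]; ring⟩

noncomputable abbrev ρ : ℤ⟦X⟧ →+* (ZMod 2)⟦X⟧ := PowerSeries.map (Int.castRingHom (ZMod 2))

lemma rho_sq (f : ℤ⟦X⟧) : ρ f ^ 2 = ρ (expand 2 two_ne_zero f) := by
  have := MvPowerSeries.map_frobenius_expand (σ := Unit) (R := ZMod 2) 2 two_ne_zero (f := ρ f)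
  rw [← this, ZMod.frobenius_zmod, ρ, map_expand]
  simp [PowerSeries.expand]

lemma rho_four (f : ℤ⟦X⟧) : ρ f ^ 4 = ρ (expand 4 four_ne_zero f) := by
  have h : ρ f ^ 4 = (ρ f ^ 2) ^ 2 := by ring
  rw [h, rho_sq, rho_sq, ← expand_mul]

lemma rho_lift (f g : ℤ⟦X⟧) (h : ρ f = ρ g) : ∃ c, f = g + 2 * c := by
  have : ∀ n, ∃ z, coeff n f = coeff n g + 2 * z := by
    intro n
    have := congrArg (coeff n) h
    simp only [ρ, coeff_map, eq_intCast] at this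
    rw [ZMod.intCast_eq_intCast_iff, Int.modEq_iff_dvd] at this
    obtain ⟨z, hz⟩ := this
    exact ⟨-z, by push_cast at hz; linarith⟩
  choose c hc using this
  refine ⟨PowerSeries.mk c, ?_⟩
  ext n
  rw [hc n, map_add, show (2 : ℤ⟦X⟧) = C 2 from (map_ofNat C 2).symm, coeff_C_mul, coeff_mk]

lemma th_add (c d : ℕ → ℤ) : th c + th d = th (fun k => c k + d k) := by
  ext n; simp only [th, map_add, coeff_mk]; split_ifs <;> simp
lemma th_sub (c d : ℕ → ℤ) : th c - th d = th (fun k => c k - d k) := by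
  ext n; simp only [th, map_sub, coeff_mk]; split_ifs <;> simp
lemma th_two (c : ℕ → ℤ) : 2 * th c = th (fun k => 2 * c k) := by
  ext n
  rw [show (2 : ℤ⟦X⟧) = C 2 from (map_ofNat C 2).symm, coeff_C_mul]
  simp only [th, coeff_mk]; split_ifs <;> simp
lemma th_one : (1 : ℤ⟦X⟧) = th (fun k => if k = 0 then 1 else 0) := by
  ext n
  by_cases hm : ∃ j, j ^ 2 = n
  · obtain ⟨j, rfl⟩ := hm
    rw [coeff_th_sq, coeff_one]; simp
  · rw [coeff_th_ne, coeff_one, if_neg]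
    · rintro rfl; exact hm ⟨0, rfl⟩
    · exact fun k hk => absurd ⟨k, hk⟩ hm

lemma c1_eq (k : ℕ) : c1 k = if k = 0 then 1 else if k % 2 = 0 then 2 else -2 := by
  unfold c1
  split_ifs with h h2
  · rfl
  · rw [Even.neg_one_pow (Nat.even_iff.2 h2)]; rfl
  · rw [Odd.neg_one_pow (Nat.odd_iff.2 (by omega))]; rfl

lemma phi1 : phi 1 = phi 3 - 2 * (O - E) := by
  simp only [phi, ind, th_sub, th_two]
  congr 1; funext k
  simp only [c1_eq]
  split_ifs <;> omega
lemma phi2 : phi 2 = phi 6 - 2 * (E - 2 * E4) := by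
  simp only [phi, ind, th_sub, th_two]
  congr 1; funext k
  simp only [c1_eq]
  split_ifs <;> omega
lemma phi3 : phi 3 = 1 + 2 * (E9 - O9) := by
  simp only [phi, ind, th_sub, th_two, th_one, th_add]
  congr 1; funext k
  simp only [c1_eq]
  split_ifs <;> omega
lemma phi6 : phi 6 = 1 + 2 * (E9 - 2 * N6) := by
  simp only [phi, ind, th_sub, th_two, th_one, th_add]
  congr 1; funext k
  simp only [c1_eq]
  split_ifs <;> omega

lemma id1 : ∃ c, O * O9 = O ^ 2 * E ^ 2 + 2 * c := by
  apply rho_lift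
  rw [OO9, ← rho_sq, map_mul ρ, map_mul ρ, map_pow, map_pow, mul_pow]

lemma id2 : ∃ c, E = O ^ 4 + E ^ 4 + 2 * c := by
  apply rho_lift
  rw [map_add, map_pow, map_pow, rho_four, rho_four, ← map_add]
  congr 1
  simp only [ind, expand_four_th, th_add]
  congr 1; funext k
  split_ifs <;> omega

lemma id3 : ∃ c, E4 = E ^ 4 + 2 * c := by
  apply rho_lift
  rw [map_pow, rho_four]
  congr 1
  simp only [ind, expand_four_th]
  congr 1; funext k
  split_ifs <;> omega

def Gr (m r : ℕ) (f : ℤ⟦X⟧) : Prop := ∀ n, n % m ≠ r % m → coeff n f = 0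

lemma Gr.mul {m r s : ℕ} {f g : ℤ⟦X⟧} (hf : Gr m r f) (hg : Gr m s g) :
    Gr m (r + s) (f * g) := by
  intro n hn
  rw [coeff_mul]
  refine sum_eq_zero fun p hp => ?_
  rw [HasAntidiagonal.mem_antidiagonal] at hp
  by_cases h1 : p.1 % m = r % m
  · by_cases h2 : p.2 % m = s % m
    · exfalso; apply hn; rw [← hp]; exact Nat.ModEq.add h1 h2
    · rw [hg _ h2, mul_zero]
  · rw [hf _ h1, zero_mul]

lemma Gr.add {m r : ℕ} {f g : ℤ⟦X⟧} (hf : Gr m r f) (hg : Gr m r g) : Gr m r (f + g) := by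
  intro n hn
  rw [map_add, hf n hn, hg n hn, add_zero]

lemma Gr.sub {m r : ℕ} {f g : ℤ⟦X⟧} (hf : Gr m r f) (hg : Gr m r g) : Gr m r (f - g) := by
  intro n hn
  rw [map_sub, hf n hn, hg n hn, sub_zero]

lemma Gr.cast {m r s : ℕ} {f : ℤ⟦X⟧} (hf : Gr m r f) (h : r % m = s % m) : Gr m s f := by
  intro n hn
  exact hf n (by rwa [h])

lemma Gr_C (m : ℕ) (z : ℤ) : Gr m 0 (C z) := by
  intro n hn
  rw [coeff_C, if_neg]
  rintro rfl
  exact hn rfl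

lemma Gr_two (m : ℕ) : Gr m 0 2 := by
  have := Gr_C m 2
  rwa [map_ofNat] at this
lemma Gr_four (m : ℕ) : Gr m 0 4 := by
  have := Gr_C m 4
  rwa [map_ofNat] at this
lemma Gr_eight (m : ℕ) : Gr m 0 8 := by
  have := Gr_C m 8
  rwa [map_ofNat] at this
lemma Gr_one (m : ℕ) : Gr m 0 1 := by
  have := Gr_C m 1
  rwa [map_one] at this

lemma Gr_ind {m r : ℕ} (p : ℕ → Prop) [DecidablePred p] (h : ∀ k, p k → k ^ 2 % m = r % m) :
    Gr m r (ind p) := by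
  intro n hn
  apply coeff_th_ne
  intro k hk
  rw [if_neg]
  intro hp
  exact hn (by rw [← hk]; exact h k hp)

lemma sq3 (k : ℕ) (h : k % 3 ≠ 0) : k ^ 2 % 3 = 1 := by
  have : k % 3 = 1 ∨ k % 3 = 2 := by omega
  rcases this with h | h <;> simp [Nat.pow_mod, h]
lemma sq3z (k : ℕ) (h : k % 3 = 0) : k ^ 2 % 3 = 0 := by simp [Nat.pow_mod, h]
lemma sq2 (k : ℕ) (h : k % 2 = 1) : k ^ 2 % 2 = 1 := by simp [Nat.pow_mod, h]
lemma sq2z (k : ℕ) (h : k % 2 = 0) : k ^ 2 % 2 = 0 := by simp [Nat.pow_mod, h]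

noncomputable def pr (f : ℤ⟦X⟧) : ℤ⟦X⟧ := PowerSeries.mk fun n => if n % 3 = 0 then coeff n f else 0

lemma pr_add (f g : ℤ⟦X⟧) : pr (f + g) = pr f + pr g := by
  ext n; simp only [pr, coeff_mk, map_add]; split_ifs <;> simp

lemma pr_self {f : ℤ⟦X⟧} (h : Gr 3 0 f) : pr f = f := by
  ext n; simp only [pr, coeff_mk]; split_ifs with h1
  · rfl
  · exact (h n h1).symm

lemma pr_zero {r : ℕ} (hr : r % 3 ≠ 0) {f : ℤ⟦X⟧} (h : Gr 3 r f) : pr f = 0 := by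
  ext n; simp only [pr, coeff_mk, map_zero]; split_ifs with h1
  · exact h n (by omega)
  · rfl

lemma pr_mul (f : ℤ⟦X⟧) {g : ℤ⟦X⟧} (h : Gr 3 0 g) : pr (f * g) = pr f * g := by
  ext n
  simp only [pr, coeff_mk, coeff_mul]
  rw [Finset.ite_sum_zero]
  refine sum_congr rfl fun p hp => ?_
  rw [HasAntidiagonal.mem_antidiagonal] at hp
  by_cases h2 : p.2 % 3 = 0
  · have : n % 3 = 0 ↔ p.1 % 3 = 0 := by omega
    simp [this]
  · rw [h _ h2]; simp

lemma phi_const (e : ℕ) : constantCoeff (phi e) = 1 := by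
  rw [← coeff_zero_eq_constantCoeff_apply]
  have := coeff_th_sq (fun k => if e ∣ k then c1 (k / e) else 0) 0
  simpa [phi, c1] using this

lemma dissect : ∃ Q, pr FF - 1 =
    8 * ((O - E) ^ 2 * (phi 3 * (O - E) - phi 6 * (E - 2 * E4))) + 32 * Q := by
  have hm := main_eq
  have hOE : Gr 3 1 (O - E) := (Gr_ind _ fun k h => sq3 k h.2).sub (Gr_ind _ fun k h => sq3 k h.2)
  have hT : Gr 3 1 (E - 2 * E4) := (Gr_ind _ fun k h => sq3 k h.2).sub
    (((Gr_two 3).mul (Gr_ind (r := 1) _ fun k h => sq3 k h.2)).cast rfl)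
  have ha : Gr 3 0 (phi 3) := by
    rw [phi3]
    exact (Gr_one 3).add (((Gr_two 3).mul ((Gr_ind (r := 0) _ fun k h => sq3z k (by omega)).sub
      (Gr_ind _ fun k h => sq3z k (by omega)))).cast rfl)
  have hb : Gr 3 0 (phi 6) := by
    rw [phi6]
    exact (Gr_one 3).add (((Gr_two 3).mul ((Gr_ind (r := 0) _ fun k h => sq3z k (by omega)).sub
      (((Gr_two 3).mul (Gr_ind (r := 0) _ fun k h => sq3z k (by omega))).cast rfl))).cast rfl)
  have ha' := phi3
  have hb' := phi6
  have ka := phi_const 3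
  have kb := phi_const 6
  rw [phi1, phi2] at hm
  generalize E9 - O9 = a' at *
  generalize E9 - 2 * N6 = b' at *
  generalize E - 2 * E4 = T at *
  generalize O - E = S at *
  generalize phi 3 = a at *
  generalize phi 6 = b at *
  have hK : Gr 3 0 ((a * a * a - 8 * (S * S * S)) * b) := by
    refine (Gr.mul (r := 0) (s := 0) (Gr.sub ?_ ?_) hb)
    · exact (ha.mul ha).mul ha
    · exact ((Gr_eight 3).mul ((hOE.mul hOE).mul hOE)).cast rfl
  have e0 : FF * ((a * a * a - 8 * (S * S * S)) * b) =
      a * (a * a * b - 8 * (T * (S * S))) + (a * (2 * (a * b * S) - 2 * (a * a * T))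
        + a * (4 * (b * (S * S)) - 4 * (a * (T * S)))) := by
    linear_combination (a ^ 2 + 2 * a * S + 4 * S ^ 2) * hm
  have p2 : pr (a * (4 * (b * (S * S)) - 4 * (a * (T * S)))) = 0 := by
    refine pr_zero (r := 2) (by norm_num) ((ha.mul (Gr.sub (r := 2) ?_ ?_)).cast rfl)
    · exact ((Gr_four 3).mul (hb.mul (hOE.mul hOE))).cast rfl
    · exact ((Gr_four 3).mul (ha.mul (hT.mul hOE))).cast rfl
  have p1 : pr (a * (2 * (a * b * S) - 2 * (a * a * T))) = 0 := by
    refine pr_zero (r := 1) (by norm_num) ((ha.mul (Gr.sub (r := 1) ?_ ?_)).cast rfl)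
    · exact ((Gr_two 3).mul ((ha.mul hb).mul hOE)).cast rfl
    · exact ((Gr_two 3).mul ((ha.mul ha).mul hT)).cast rfl
  have p0 : pr (a * (a * a * b - 8 * (T * (S * S)))) = a * (a * a * b - 8 * (T * (S * S))) := by
    refine pr_self ((ha.mul (Gr.sub (r := 0) ?_ ?_)).cast rfl)
    · exact ((ha.mul ha).mul hb)
    · exact ((Gr_eight 3).mul (hT.mul (hOE.mul hOE))).cast rfl
  have e1 := congrArg pr e0
  rw [pr_mul _ hK, pr_add, pr_add, p0, p1, p2] at e1
  have hS0 : constantCoeff S = 0 := by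
    rw [← coeff_zero_eq_constantCoeff_apply]; exact hOE 0 (by norm_num)
  have hu : IsUnit ((a * a * a - 8 * (S * S * S)) * b) := by
    rw [PowerSeries.isUnit_iff_constantCoeff]
    simp [hS0, ka, kb]
  obtain ⟨y, hy⟩ := hu.exists_right_inv
  obtain ⟨α, hα⟩ : ∃ α, a ^ 2 = 1 + 4 * α := ⟨a' + a' ^ 2, by rw [ha']; ring⟩
  obtain ⟨β, hβ⟩ : ∃ β, b ^ 2 = 1 + 4 * β := ⟨b' + b' ^ 2, by rw [hb']; ring⟩
  have h1 : pr FF - 1 = 8 * (S ^ 2 * (b * S - a * T)) * y := by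
    linear_combination y * e1 - (pr FF - 1) * hy
  obtain ⟨t, ht⟩ : ∃ t, y = a * b + 4 * t := by
    refine ⟨y * (-2 * α - 4 * α ^ 2 - β * (1 + 4 * α) ^ 2 + 2 * (S ^ 3 * a * b ^ 2)), ?_⟩
    have h4 : a ^ 4 * b ^ 2 = (1 + 4 * α) ^ 2 * (1 + 4 * β) := by
      rw [← hα, ← hβ]; ring
    linear_combination a * b * hy - y * h4
  refine ⟨S ^ 2 * (b * S - a * T) * t + S ^ 2 * (β * a * S - α * b * T), ?_⟩
  rw [h1, ht]
  linear_combination 8 * S ^ 2 * a * S * hβ - 8 * S ^ 2 * b * T * hα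

lemma parity : ∃ U V, Gr 2 1 U ∧
    (O - E) ^ 2 * (phi 3 * (O - E) - phi 6 * (E - 2 * E4)) = U + 4 * V := by
  obtain ⟨x1, h1⟩ := id1
  obtain ⟨x2, h2⟩ := id2
  obtain ⟨x3, h3⟩ := id3
  have gO : Gr 2 1 O := Gr_ind _ fun k h => sq2 k (by omega)
  have gO9 : Gr 2 1 O9 := Gr_ind _ fun k h => sq2 k (by omega)
  have gE : Gr 2 0 E := Gr_ind _ fun k h => sq2z k (by omega)
  have gE4 : Gr 2 0 E4 := Gr_ind _ fun k h => sq2z k (by omega)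
  have gE9 : Gr 2 0 E9 := Gr_ind _ fun k h => sq2z k (by omega)
  have g2 := Gr_two 2
  refine ⟨(O * O + E * E) * (O + 2 * (E9 * O) + 2 * (O9 * E))
    - 2 * (O * E) * (2 * E4 - 2 * E - 2 * (O9 * O)),
    (-O ^ 2 * E + x2 * O ^ 2 - O ^ 4 * E ^ 2 + (O ^ 2 + E ^ 2) * (x3 - x2 - x1))
    - O * E * (E9 * O + O9 * E)
    + (O - E) ^ 2 * (-E9 * E + E9 * E4 + N6 * (E - 2 * E4)), ?_, ?_⟩
  · refine Gr.sub ?_ ?_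
    · refine (Gr.mul (r := 0) (s := 1) (Gr.add ?_ ?_) (Gr.add (Gr.add gO ?_) ?_)).cast rfl
      · exact (gO.mul gO).cast rfl
      · exact (gE.mul gE).cast rfl
      · exact (g2.mul (gE9.mul gO)).cast rfl
      · exact (g2.mul (gO9.mul gE)).cast rfl
    · refine (Gr.mul (r := 1) (s := 0) ?_ (Gr.sub (Gr.sub ?_ ?_) ?_)).cast rfl
      · exact (g2.mul (gO.mul gE)).cast rfl
      · exact (g2.mul gE4).cast rfl
      · exact (g2.mul gE).cast rfl
      · exact (g2.mul (gO9.mul gO)).cast rfl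
  · rw [phi3, phi6]
    linear_combination (-2 * (O ^ 2 + E ^ 2)) * h1 + (-2 * (O ^ 2 + E ^ 2) + 2 * O ^ 2) * h2
      + 2 * (O ^ 2 + E ^ 2) * h3

lemma final (n : ℕ) : Rbar 4 9 (18 * n + 12) ≡ 0 [MOD 32] := by
  rw [Nat.modEq_zero_iff_dvd, ← Int.natCast_dvd_natCast]
  obtain ⟨Q, hQ⟩ := dissect
  obtain ⟨U, V, hU, hV⟩ := parity
  rw [hV] at hQ
  have hQ' : pr FF - 1 = C 8 * U + C 32 * (V + Q) := by
    rw [hQ, map_ofNat, map_ofNat]; ring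
  have h := congrArg (coeff (18 * n + 12)) hQ'
  rw [map_sub, map_add, coeff_C_mul, coeff_C_mul, hU _ (by omega), coeff_one, if_neg (by omega),
    mul_zero, zero_add, sub_zero, pr, coeff_mk, if_pos (by omega), FF, coeff_mk] at h
  exact ⟨_, h⟩
end RbarAux

theorem Rbar_four_nine_18n_12_mod_32 (n : ℕ) :
    Rbar 4 9 (18 * n + 12) ≡ 0 [MOD 32] := by
  exact RbarAux.final n
end
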